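/- arXiv:1903.00508 — 9 statements merged into one kernel-verified Lean document; each statement's English description precedes it below -/
import Mathlib

section
/- Let g : [0,∞) → ℝ be nondecreasing and convex. Then the function W̄ : ℝ^{2×2} → ℝ defined by W̄(F) = g(√(‖F‖² − 2·det F)) is convex on the space of real 2×2 matrices. In particular, any W : SL(2) → ℝ of the form W(F) = φ(√(‖F‖² − 2)) with φ nondecreasing and convex admits a convex (hence polyconvex) extension to ℝ^{2×2}. -/
/-!
The identity `‖F‖² − 2 det F = (F₁₁ − F₂₂)² + (F₁₂ + F₂₁)²` says that `√(‖F‖² − 2 det F)` is the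
modulus of a complex number depending real-linearly on `F` (`antiConformalPart`), hence is convex
in `F`. Composing with a nondecreasing convex `g` on `[0, ∞)` preserves convexity. On `SL(2)` one
has `det F = 1`, so this same function is the required convex extension.
-/

/-- The squared Frobenius norm of a real 2×2 matrix. -/
noncomputable def frobSq (F : Matrix (Fin 2) (Fin 2) ℝ) : ℝ := ∑ i, ∑ j, (F i j) ^ 2

/-- The real-linear map `F ↦ (F₁₁ − F₂₂) + i (F₁₂ + F₂₁)`, with `ℂ` serving as the Euclidean plane.
It vanishes exactly on the matrices `a I + b J`, where `J` is the rotation by a right angle. -/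
def antiConformalPart : Matrix (Fin 2) (Fin 2) ℝ →ₗ[ℝ] ℂ where
  toFun F := ⟨F 0 0 - F 1 1, F 0 1 + F 1 0⟩
  map_add' F G := by
    apply Complex.ext <;> simp <;> ring
  map_smul' c F := by
    apply Complex.ext <;> simp <;> ring

lemma sqrt_frobSq_sub_two_det (F : Matrix (Fin 2) (Fin 2) ℝ) :
    Real.sqrt (frobSq F - 2 * F.det) = ‖antiConformalPart F‖ := by
  rw [Complex.norm_def, Complex.normSq_apply]
  congr 1
  simp only [frobSq, Matrix.det_fin_two, Fin.sum_univ_two, antiConformalPart, LinearMap.coe_mk,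
    AddHom.coe_mk]
  ring

/-- For `g : [0,∞) → ℝ` nondecreasing and convex, the function
`W̄(F) = g(√(‖F‖² − 2 det F))` is convex on `ℝ^{2×2}`; in particular, any
`W : SL(2) → ℝ` of the form `W(F) = g(√(‖F‖² − 2))` admits a convex extension. -/
theorem convexity_of_conformal_type_energy
    (g : ℝ → ℝ) (hg_mono : MonotoneOn g (Set.Ici 0)) (hg_conv : ConvexOn ℝ (Set.Ici 0) g) :
    ConvexOn ℝ Set.univ
      (fun F : Matrix (Fin 2) (Fin 2) ℝ => g (Real.sqrt (frobSq F - 2 * F.det))) ∧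
    ∀ W : Matrix (Fin 2) (Fin 2) ℝ → ℝ,
      (∀ F : Matrix (Fin 2) (Fin 2) ℝ, F.det = 1 → W F = g (Real.sqrt (frobSq F - 2))) →
      ∃ Wt : Matrix (Fin 2) (Fin 2) ℝ → ℝ, ConvexOn ℝ Set.univ Wt ∧
        ∀ F : Matrix (Fin 2) (Fin 2) ℝ, F.det = 1 → Wt F = W F := by
  have hconv : ConvexOn ℝ Set.univ
      (fun F : Matrix (Fin 2) (Fin 2) ℝ => g (Real.sqrt (frobSq F - 2 * F.det))) := by
    simp only [sqrt_frobSq_sub_two_det]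
    refine ⟨convex_univ, fun F _ G _ a b ha hb hab => ?_⟩
    have hnorm : ‖antiConformalPart (a • F + b • G)‖
        ≤ a • ‖antiConformalPart F‖ + b • ‖antiConformalPart G‖ :=
      (convexOn_univ_norm.comp_linearMap antiConformalPart).2 trivial trivial ha hb hab
    have hF : ‖antiConformalPart F‖ ∈ Set.Ici (0 : ℝ) := norm_nonneg _
    have hG : ‖antiConformalPart G‖ ∈ Set.Ici (0 : ℝ) := norm_nonneg _
    exact (hg_mono (norm_nonneg _) (hg_conv.1 hF hG ha hb hab) hnorm).trans
      (hg_conv.2 hF hG ha hb hab)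
  refine ⟨hconv, fun W hW => ⟨_, hconv, fun F hdet => ?_⟩⟩
  simp only [hW F hdet, hdet, mul_one]
end

section
/- Let φ̃ : ℝ → ℝ be even, and define W : SL(2) → ℝ by W(F) = φ̃(√(‖F‖² − 2)). If W is rank-one convex on SL(2) — i.e. W(F + tH) ≤ (1−t)·W(F) + t·W(F+H) for all t ∈ [0,1] and all F, H with rank H = 1, det F = 1 and det(F+H) = 1 — then φ̃ is convex on ℝ. -/
/-- Rank-one convexity of a function on SL(2): the convexity inequality holds along all
rank-one segments with both endpoints in SL(2). -/
def RankOneConvexOnSL2 (w : Matrix (Fin 2) (Fin 2) ℝ → ℝ) : Prop :=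
  ∀ F H : Matrix (Fin 2) (Fin 2) ℝ, H.rank = 1 → F.det = 1 → (F + H).det = 1 →
    ∀ t ∈ Set.Icc (0 : ℝ) 1, w (F + t • H) ≤ (1 - t) * w F + t * w (F + H)

theorem phi_shear (φt : ℝ → ℝ) (heven : ∀ t : ℝ, φt (-t) = φt t) (x : ℝ) :
    φt (Real.sqrt (frobSq !![1, x; 0, 1] - 2)) = φt x := by
  have h : frobSq !![1, x; 0, 1] - 2 = x ^ 2 := by
    simp [frobSq, Fin.sum_univ_two]
    ring
  rw [h, Real.sqrt_sq_eq_abs]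
  rcases abs_choice x with h | h <;> rw [h]
  exact heven x

theorem rank_shear_direction {c : ℝ} (hc : c ≠ 0) : (!![0, c; 0, 0]).rank = 1 := by
  have h : !![0, c; 0, 0] = Matrix.vecMulVec ![1, 0] ![0, c] := by
    ext i j
    fin_cases i <;> fin_cases j <;> simp [Matrix.vecMulVec_apply]
  apply le_antisymm
  · rw [h]
    exact Matrix.rank_vecMulVec_le _ _
  · rw [Nat.one_le_iff_ne_zero]
    intro h0
    rw [Matrix.rank, Submodule.finrank_eq_zero, LinearMap.range_eq_bot] at h0
    have h1 := congrFun (LinearMap.congr_fun h0 ![0, 1]) 0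
    exact hc (by simpa using h1)

/-- If `W(F) = φ̃(√(‖F‖² − 2))` with `φ̃` even is rank-one convex on SL(2),
then `φ̃` is convex on ℝ. -/
theorem rankOneConvex_implies_phi_convex
    (φt : ℝ → ℝ) (heven : ∀ t : ℝ, φt (-t) = φt t)
    (hW : RankOneConvexOnSL2 (fun F => φt (Real.sqrt (frobSq F - 2)))) :
    ConvexOn ℝ Set.univ φt := by
  refine ⟨convex_univ, ?_⟩
  intro x _ y _ a b ha hb hab
  obtain rfl : a = 1 - b := by linarith
  simp only [smul_eq_mul]
  -- A degenerate segment has direction of rank zero, so it is treated separately.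
  rcases eq_or_ne x y with rfl | hxy
  · rw [← add_mul, ← add_mul, hab, one_mul, one_mul]
  have hadd (t : ℝ) : !![1, x; 0, 1] + t • !![0, y - x; 0, 0]
      = !![1, (1 - t) * x + t * y; 0, 1] := by
    ext i j
    fin_cases i <;> fin_cases j <;> simp
    ring
  have hend : !![1, x; 0, 1] + !![0, y - x; 0, 0] = !![1, y; 0, 1] := by
    simp
  have key := hW !![1, x; 0, 1] !![0, y - x; 0, 0]
    (rank_shear_direction (sub_ne_zero.mpr hxy.symm)) (by simp [Matrix.det_fin_two])
    (by rw [hend]; simp [Matrix.det_fin_two]) b ⟨hb, by linarith⟩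
  simpa only [hadd, hend, phi_shear φt heven] using key
end

section
/- Let φ̃ : ℝ → ℝ be even and let W : SL(2) → ℝ be defined by W(F) = φ̃(√(‖F‖² − 2)) (so that W is objective and isotropic, with W(F) = φ̃(λ₁ − λ₂) in terms of the singular values λ₁, λ₂ of F). Then the following are equivalent: (i) W is rank-one convex on SL(2); (ii) W admits a convex extension, i.e. there exists a convex W̃ : ℝ^{2×2} → ℝ with W̃(F) = W(F) for all F ∈ SL(2); (iii) φ̃ is convex on ℝ; (iv) the restriction φ = φ̃|_{[0,∞)} is nondecreasing and convex on [0,∞). -/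
/-- The linear map `F ↦ (F₀₀ - F₁₁) + i (F₀₁ + F₁₀)`, whose modulus is the difference `λ₁ - λ₂` of the
singular values when `det F ≥ 0`; it is twice the anticonformal part of `F`. -/
noncomputable def antiConfPart : Matrix (Fin 2) (Fin 2) ℝ →ₗ[ℝ] ℂ where
  toFun F := ⟨F 0 0 - F 1 1, F 0 1 + F 1 0⟩
  map_add' F G := by
    apply Complex.ext <;> simp <;> ring
  map_smul' c F := by
    apply Complex.ext <;> simp <;> ring

lemma norm_antiConfPart_of_det_eq_one {F : Matrix (Fin 2) (Fin 2) ℝ} (hF : F.det = 1) :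
    ‖antiConfPart F‖ = Real.sqrt (frobSq F - 2) := by
  rw [Complex.norm_def]
  congr 1
  rw [Matrix.det_fin_two] at hF
  simp only [antiConfPart, LinearMap.coe_mk, AddHom.coe_mk, Complex.normSq_mk, frobSq,
    Fin.sum_univ_two]
  linear_combination -2 * hF

/-- On simple shears the energy `W` is `φ̃` itself. -/
lemma energy_shear {φt : ℝ → ℝ} (heven : ∀ t : ℝ, φt (-t) = φt t) (x : ℝ) :
    φt (Real.sqrt (frobSq !![1, x; 0, 1] - 2)) = φt x := by
  have h : frobSq !![1, x; 0, 1] - 2 = x ^ 2 := by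
    simp [frobSq, Fin.sum_univ_two]
    ring
  rw [h, Real.sqrt_sq_eq_abs]
  rcases abs_choice x with hx | hx <;> rw [hx]
  exact heven x

lemma rank_shear_direction_s7 {s : ℝ} (hs : s ≠ 0) :
    (!![0, s; 0, 0] : Matrix (Fin 2) (Fin 2) ℝ).rank = 1 := by
  have h : (!![0, s; 0, 0] : Matrix (Fin 2) (Fin 2) ℝ) = Matrix.vecMulVec ![s, 0] ![0, 1] := by
    ext i j
    fin_cases i <;> fin_cases j <;> simp [Matrix.vecMulVec]
  apply le_antisymm
  · rw [h]
    exact Matrix.rank_vecMulVec_le _ _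
  · rw [Nat.one_le_iff_ne_zero]
    intro h0
    rw [Matrix.rank, Submodule.finrank_eq_zero, LinearMap.range_eq_bot] at h0
    have h1 := congrFun (LinearMap.congr_fun h0 ![0, 1]) 0
    exact hs (by simpa [Matrix.mulVec, dotProduct, Fin.sum_univ_two] using h1)

lemma convexOn_of_rankOneConvex {φt : ℝ → ℝ} (heven : ∀ t : ℝ, φt (-t) = φt t)
    (h : RankOneConvexOnSL2 (fun F => φt (Real.sqrt (frobSq F - 2)))) :
    ConvexOn ℝ Set.univ φt := by
  refine ⟨convex_univ, fun x _ y _ a b ha hb hab => ?_⟩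
  obtain rfl : a = 1 - b := by linarith
  rcases eq_or_ne x y with rfl | hxy
  · rw [← add_smul, ← add_smul, hab, one_smul, one_smul]
  have key := h !![1, x; 0, 1] !![0, y - x; 0, 0] (rank_shear_direction_s7 (sub_ne_zero.2 hxy.symm))
    (by simp [Matrix.det_fin_two]) (by simp [Matrix.det_fin_two]) b ⟨hb, by linarith⟩
  have e1 : (!![1, x; 0, 1] + b • !![0, y - x; 0, 0] : Matrix (Fin 2) (Fin 2) ℝ)
      = !![1, (1 - b) * x + b * y; 0, 1] := by
    ext i j
    fin_cases i <;> fin_cases j <;> simp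
    ring
  have e2 : (!![1, x; 0, 1] + !![0, y - x; 0, 0] : Matrix (Fin 2) (Fin 2) ℝ)
      = !![1, y; 0, 1] := by
    ext i j
    fin_cases i <;> fin_cases j <;> simp
  simp only [e1, e2, energy_shear heven] at key
  simpa only [smul_eq_mul] using key

lemma monotoneOn_of_even_of_convexOn {φt : ℝ → ℝ} (heven : ∀ t : ℝ, φt (-t) = φt t)
    (h : ConvexOn ℝ Set.univ φt) : MonotoneOn φt (Set.Ici 0) := by
  intro x hx y _ hxy
  rw [Set.mem_Ici] at hx
  have hseg : x ∈ segment ℝ (-y) y := by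
    rw [segment_eq_Icc (by linarith)]
    exact ⟨by linarith, hxy⟩
  simpa [heven] using h.le_on_segment (Set.mem_univ _) (Set.mem_univ _) hseg

lemma convexOn_comp_norm_antiConfPart {φt : ℝ → ℝ} (hmono : MonotoneOn φt (Set.Ici 0))
    (hconv : ConvexOn ℝ (Set.Ici 0) φt) : ConvexOn ℝ Set.univ (fun F => φt ‖antiConfPart F‖) := by
  refine ⟨convex_univ, fun F _ G _ a b ha hb hab => ?_⟩
  refine le_trans (hmono (norm_nonneg _) ?_ ?_)
    (hconv.2 (norm_nonneg (antiConfPart F)) (norm_nonneg (antiConfPart G)) ha hb hab)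
  · simp only [Set.mem_Ici, smul_eq_mul]
    positivity
  · rw [map_add, map_smul, map_smul]
    refine (norm_add_le _ _).trans_eq ?_
    rw [norm_smul_of_nonneg ha, norm_smul_of_nonneg hb, smul_eq_mul, smul_eq_mul]

lemma rankOneConvex_of_convex_extension {w Wt : Matrix (Fin 2) (Fin 2) ℝ → ℝ}
    (hW : ConvexOn ℝ Set.univ Wt) (hext : ∀ F : Matrix (Fin 2) (Fin 2) ℝ, F.det = 1 → Wt F = w F) :
    RankOneConvexOnSL2 w := by
  intro F H hH hF hFH t ht
  -- The determinant is affine along `F + t H` because `det H = 0`.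
  have hH0 : H.det = 0 := by
    by_contra hne
    have := Matrix.rank_of_isUnit H ((Matrix.isUnit_iff_isUnit_det H).2 (isUnit_iff_ne_zero.2 hne))
    simp [hH] at this
  have hdet : (F + t • H).det = 1 := by
    simp only [Matrix.det_fin_two, Matrix.add_apply, Matrix.smul_apply, smul_eq_mul] at *
    linear_combination (1 - t) * hF + t * hFH + (t ^ 2 - t) * hH0
  rw [← hext _ hdet, ← hext _ hF, ← hext _ hFH]
  have key := hW.2 (Set.mem_univ F) (Set.mem_univ (F + H)) (sub_nonneg.2 ht.2) ht.1
    (sub_add_cancel 1 t)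
  have e : (1 - t) • F + t • (F + H) = F + t • H := by module
  rwa [e] at key

/-- Theorem 3.4: for `W(F) = φ̃(√(‖F‖² − 2))` with `φ̃` even, the following are
equivalent: (i) `W` is rank-one convex on SL(2); (ii) `W` admits a convex extension
to `ℝ^{2×2}`; (iii) `φ̃` is convex on ℝ; (iv) `φ = φ̃|_{[0,∞)}` is nondecreasing and
convex on `[0,∞)`. -/
theorem convexity_criteria_tfae_on_SL2
    (φt : ℝ → ℝ) (heven : ∀ t : ℝ, φt (-t) = φt t) :
    List.TFAE [
      RankOneConvexOnSL2 (fun F => φt (Real.sqrt (frobSq F - 2))),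
      (∃ Wt : Matrix (Fin 2) (Fin 2) ℝ → ℝ, ConvexOn ℝ Set.univ Wt ∧
        ∀ F : Matrix (Fin 2) (Fin 2) ℝ, F.det = 1 → Wt F = φt (Real.sqrt (frobSq F - 2))),
      ConvexOn ℝ Set.univ φt,
      MonotoneOn φt (Set.Ici 0) ∧ ConvexOn ℝ (Set.Ici 0) φt ] := by
  tfae_have 1 → 3 := convexOn_of_rankOneConvex heven
  tfae_have 3 → 4 := fun h =>
    ⟨monotoneOn_of_even_of_convexOn heven h, h.subset (Set.subset_univ _) (convex_Ici 0)⟩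
  tfae_have 4 → 2 := fun ⟨hmono, hconv⟩ =>
    ⟨_, convexOn_comp_norm_antiConfPart hmono hconv,
      fun _ hF => congrArg φt (norm_antiConfPart_of_det_eq_one hF)⟩
  tfae_have 2 → 1 := fun ⟨_, hW, hext⟩ => rankOneConvex_of_convex_extension hW hext
  tfae_finish
end

section
/- Let φ : [0,∞) → ℝ be bounded below and let φ̃ : ℝ → ℝ be its even extension, φ̃(t) = φ(|t|). Define the monotone-convex envelope C_m φ(t) = sup{ p(t) : p : [0,∞) → ℝ nondecreasing and convex with p ≤ φ on [0,∞) } and the convex envelope C φ̃(t) = sup{ p(t) : p : ℝ → ℝ convex with p ≤ φ̃ on ℝ }. Then C_m φ(t) = C φ̃(t) = C φ̃(−t) for all t ≥ 0. -/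
/-!
The families of minorants on the two sides can be exchanged without lowering the value at `t ≥ 0`.
If `p` is a nondecreasing convex minorant of `φ` on `[0,∞)`, then `s ↦ p |s|` is a convex minorant
of the even extension (`convexOn_comp_abs`). If `q` is a convex minorant of the even extension,
then so is its even majorant `s ↦ max (q s) (q (-s))`, and an even convex function is nondecreasing
on `[0,∞)` (`monotoneOn_of_convexOn_even`). Boundedness below of `φ` supplies a constant minorant,
so both suprema are over nonempty sets, and both sets are bounded above by `φ t`. The symmetry in
`t` comes from reflecting minorants.
-/

/-- The monotone-convex envelope of `φ : [0,∞) → ℝ`: the pointwise supremum of all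
nondecreasing convex minorants of `φ` on `[0,∞)`. -/
noncomputable def monotoneConvexEnvelope (φ : ℝ → ℝ) (t : ℝ) : ℝ :=
  sSup {y : ℝ | ∃ p : ℝ → ℝ, MonotoneOn p (Set.Ici 0) ∧ ConvexOn ℝ (Set.Ici 0) p ∧
    (∀ s : ℝ, 0 ≤ s → p s ≤ φ s) ∧ y = p t}

/-- The convex envelope of `f : ℝ → ℝ`: the pointwise supremum of all convex
minorants of `f`. -/
noncomputable def convexEnvelope (f : ℝ → ℝ) (t : ℝ) : ℝ :=
  sSup {y : ℝ | ∃ p : ℝ → ℝ, ConvexOn ℝ Set.univ p ∧ (∀ s : ℝ, p s ≤ f s) ∧ y = p t}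

theorem convexOn_comp_neg {q : ℝ → ℝ} (hq : ConvexOn ℝ Set.univ q) :
    ConvexOn ℝ Set.univ (fun s => q (-s)) := by
  refine ⟨convex_univ, fun x _ y _ a b ha hb hab => ?_⟩
  have h := hq.2 (Set.mem_univ (-x)) (Set.mem_univ (-y)) ha hb hab
  have e : -(a • x + b • y) = a • (-x) + b • (-y) := by simp only [smul_eq_mul]; ring
  simpa only [e] using h

theorem convexOn_comp_abs {p : ℝ → ℝ} (hmono : MonotoneOn p (Set.Ici 0))
    (hconv : ConvexOn ℝ (Set.Ici 0) p) : ConvexOn ℝ Set.univ (fun s => p |s|) := by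
  refine ⟨convex_univ, fun x _ y _ a b ha hb hab => ?_⟩
  have h := hconv.2 (Set.mem_Ici.2 (abs_nonneg x)) (Set.mem_Ici.2 (abs_nonneg y)) ha hb hab
  refine le_trans (hmono (Set.mem_Ici.2 (abs_nonneg _)) (Set.mem_Ici.2 ?_) ?_) h
  · simp only [smul_eq_mul]
    positivity
  · simpa [abs_mul, abs_of_nonneg ha, abs_of_nonneg hb] using abs_add_le (a * x) (b * y)

/-- For `0 ≤ a ≤ b`, the point `a` lies in `[-b, b]`, and an even convex function takes its maximum
over this interval at both endpoints. -/
theorem monotoneOn_of_convexOn_even {r : ℝ → ℝ} (hr : ConvexOn ℝ Set.univ r)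
    (heven : ∀ s, r (-s) = r s) : MonotoneOn r (Set.Ici 0) := by
  intro a ha b _ hab
  have ha' : (0 : ℝ) ≤ a := ha
  have h := hr.le_max_of_mem_Icc (Set.mem_univ (-b)) (Set.mem_univ b)
    (z := a) ⟨by linarith, hab⟩
  simpa [heven] using h

/-- For `φ : [0,∞) → ℝ` bounded below with even extension `φ̃(t) = φ(|t|)`, the
monotone-convex envelope of `φ` agrees with the convex envelope of `φ̃`:
`C_m φ(t) = C φ̃(t) = C φ̃(−t)` for all `t ≥ 0`. -/
theorem monotoneConvexEnvelope_eq_convexEnvelope_even_extension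
    (φ : ℝ → ℝ) (hbd : ∃ c : ℝ, ∀ t : ℝ, 0 ≤ t → c ≤ φ t) :
    ∀ t : ℝ, 0 ≤ t →
      monotoneConvexEnvelope φ t = convexEnvelope (fun s => φ |s|) t ∧
      convexEnvelope (fun s => φ |s|) t = convexEnvelope (fun s => φ |s|) (-t) := by
  obtain ⟨c, hc⟩ := hbd
  intro t ht
  constructor
  · apply le_antisymm
    · refine csSup_le
        ⟨c, fun _ => c, monotoneOn_const, convexOn_const c (convex_Ici 0), hc, rfl⟩ ?_
      rintro y ⟨p, hmono, hconv, hle, rfl⟩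
      refine le_csSup ⟨φ |t|, ?_⟩ ⟨fun s => p |s|, convexOn_comp_abs hmono hconv,
        fun s => hle _ (abs_nonneg s), by simp only [abs_of_nonneg ht]⟩
      rintro y ⟨q, -, hq, rfl⟩
      exact hq t
    · refine csSup_le ⟨c, fun _ => c, convexOn_const c convex_univ,
        fun s => hc _ (abs_nonneg s), rfl⟩ ?_
      rintro y ⟨q, hconv, hle, rfl⟩
      have hr := hconv.sup (convexOn_comp_neg hconv)
      refine (le_max_left (q t) (q (-t))).trans (le_csSup ⟨φ t, ?_⟩
        ⟨fun s => max (q s) (q (-s)),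
          monotoneOn_of_convexOn_even hr (fun s => by simp [max_comm]),
          hr.subset (Set.subset_univ _) (convex_Ici 0), fun s hs => ?_, rfl⟩)
      · rintro y ⟨p, -, -, hp, rfl⟩
        exact hp t ht
      · have h₁ := hle s
        have h₂ := hle (-s)
        simp only [abs_neg, abs_of_nonneg hs] at h₁ h₂
        exact max_le h₁ h₂
  · unfold convexEnvelope
    congr 1
    ext y
    constructor
    · rintro ⟨q, hconv, hle, rfl⟩
      exact ⟨fun s => q (-s), convexOn_comp_neg hconv,
        fun s => by simpa using hle (-s), by simp⟩
    · rintro ⟨q, hconv, hle, rfl⟩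
      exact ⟨fun s => q (-s), convexOn_comp_neg hconv,
        fun s => by simpa using hle (-s), rfl⟩
end

section
/- Let W : SL(2) → ℝ be objective, isotropic (W(RF) = W(FR) = W(F) for all F ∈ SL(2), R ∈ SO(2)) and bounded below, and let φ̃ : ℝ → ℝ be the even function with W(F) = φ̃(√(‖F‖² − 2)) for all F ∈ SL(2). Define CW(F) = sup{ w(F) : w : ℝ^{2×2} → ℝ convex with w(X) ≤ W(X) for all X ∈ SL(2) }. Then CW(F) = C φ̃(√(‖F‖² − 2)) for all F ∈ SL(2), where C φ̃ is the convex envelope of φ̃. -/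
/-- Membership in the special orthogonal group SO(2). -/
def SO2 (R : Matrix (Fin 2) (Fin 2) ℝ) : Prop := R.transpose * R = 1 ∧ R.det = 1

/-- The convex envelope of `W : SL(2) → ℝ`: the pointwise supremum of all convex
functions on `ℝ^{2×2}` lying below `W` on SL(2). -/
noncomputable def convexEnvelopeSL2 (W : Matrix (Fin 2) (Fin 2) ℝ → ℝ)
    (F : Matrix (Fin 2) (Fin 2) ℝ) : ℝ :=
  sSup {y : ℝ | ∃ w : Matrix (Fin 2) (Fin 2) ℝ → ℝ, ConvexOn ℝ Set.univ w ∧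
    (∀ X : Matrix (Fin 2) (Fin 2) ℝ, X.det = 1 → w X ≤ W X) ∧ y = w F}

lemma frobSq_sub_two (X : Matrix (Fin 2) (Fin 2) ℝ) (hX : X.det = 1) :
    frobSq X - 2 = (X 0 0 - X 1 1) ^ 2 + (X 0 1 + X 1 0) ^ 2 := by
  rw [Matrix.det_fin_two] at hX
  simp only [frobSq, Fin.sum_univ_two]
  linear_combination 2 * hX

/-- Polar form of a planar vector; the direction is still a unit vector when the length is `0`. -/
lemma exists_direction (x y : ℝ) : ∃ e f : ℝ, e ^ 2 + f ^ 2 = 1 ∧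
    x = √(x ^ 2 + y ^ 2) * e ∧ y = √(x ^ 2 + y ^ 2) * f := by
  have hsq : √(x ^ 2 + y ^ 2) ^ 2 = x ^ 2 + y ^ 2 := Real.sq_sqrt (by positivity)
  set t := √(x ^ 2 + y ^ 2)
  by_cases ht : t = 0
  · rw [ht] at hsq
    have hx : x = 0 := by nlinarith [sq_nonneg x, sq_nonneg y]
    have hy : y = 0 := by nlinarith [sq_nonneg x, sq_nonneg y]
    exact ⟨1, 0, by norm_num, by simp [hx, ht], by simp [hy]⟩
  · refine ⟨x / t, y / t, ?_, by field_simp, by field_simp⟩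
    field_simp
    linarith

/-- Through each point of SL(2) there is an affine line contained in SL(2) along which
`‖·‖² - 2` is the square of a function affine of slope one in the parameter. -/
lemma exists_line (F : Matrix (Fin 2) (Fin 2) ℝ) (hF : F.det = 1) :
    ∃ N : Matrix (Fin 2) (Fin 2) ℝ, ∀ r : ℝ, (F + r • N).det = 1 ∧
      frobSq (F + r • N) - 2 = (√(frobSq F - 2) + r) ^ 2 := by
  rw [frobSq_sub_two F hF]
  obtain ⟨e, f, hef, h1, h2⟩ := exists_direction (F 0 0 - F 1 1) (F 0 1 + F 1 0)
  set t := √((F 0 0 - F 1 1) ^ 2 + (F 0 1 + F 1 0) ^ 2)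
  -- In the coordinates `z = (a - d, b + c)`, `u = (a + d, b - c)` one has `4 det = |u|² - |z|²`.
  -- The direction `N` has `z(N) = (e, f)` and `u(N) = (t u + 2 u⊥) / (4 + t²)`, where `u = u(F)`.
  obtain ⟨u, hu⟩ : ∃ u, u = F 0 0 + F 1 1 := ⟨_, rfl⟩
  obtain ⟨v, hv⟩ : ∃ v, v = F 0 1 - F 1 0 := ⟨_, rfl⟩
  have h00 : F 0 0 = (u + t * e) / 2 := by linarith
  have h11 : F 1 1 = (u - t * e) / 2 := by linarith
  have h01 : F 0 1 = (v + t * f) / 2 := by linarith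
  have h10 : F 1 0 = (t * f - v) / 2 := by linarith
  have hdet : u ^ 2 + v ^ 2 = 4 + t ^ 2 := by
    rw [Matrix.det_fin_two, h00, h11, h01, h10] at hF
    linear_combination 4 * hF + t ^ 2 * hef
  have hpos : (4 + t ^ 2 : ℝ) ≠ 0 := by positivity
  obtain ⟨m, hm⟩ : ∃ m, m = (t * u - 2 * v) / (4 + t ^ 2) := ⟨_, rfl⟩
  obtain ⟨n, hn⟩ : ∃ n, n = (t * v + 2 * u) / (4 + t ^ 2) := ⟨_, rfl⟩
  have hmn : m ^ 2 + n ^ 2 = 1 := by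
    rw [hm, hn]
    field_simp
    linear_combination (4 + t ^ 2) * hdet
  have hum : u * m + v * n = t := by
    rw [hm, hn]
    field_simp
    linear_combination t * hdet
  refine ⟨!![(m + e) / 2, (n + f) / 2; (f - n) / 2, (m - e) / 2], fun r => ?_⟩
  have hd : (F + r • !![(m + e) / 2, (n + f) / 2; (f - n) / 2, (m - e) / 2]).det = 1 := by
    rw [Matrix.det_fin_two]
    simp only [Matrix.add_apply, Matrix.smul_apply, smul_eq_mul, Matrix.of_apply,
      Matrix.cons_val', Matrix.cons_val_zero, Matrix.cons_val_one, Matrix.cons_val_fin_one,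
      h00, h11, h01, h10]
    linear_combination (1 / 4) * hdet + (r ^ 2 / 4) * hmn + (r / 2) * hum
      - ((t + r) ^ 2 / 4) * hef
  refine ⟨hd, ?_⟩
  rw [frobSq_sub_two _ hd]
  simp only [Matrix.add_apply, Matrix.smul_apply, smul_eq_mul, Matrix.of_apply,
    Matrix.cons_val', Matrix.cons_val_zero, Matrix.cons_val_one, Matrix.cons_val_fin_one,
    h00, h11, h01, h10]
  linear_combination (t + r) ^ 2 * hef

/-- The convex-envelope part of Theorem 3.5: for an objective, isotropic `W : SL(2) → ℝ`
bounded below with `W(F) = φ̃(√(‖F‖² − 2))`, one has `CW(F) = C φ̃(√(‖F‖² − 2))`. -/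
theorem convexEnvelopeSL2_eq_scalar_convexEnvelope
    (W : Matrix (Fin 2) (Fin 2) ℝ → ℝ)
    (hobj : ∀ F R : Matrix (Fin 2) (Fin 2) ℝ, F.det = 1 → SO2 R →
      W (R * F) = W F ∧ W (F * R) = W F)
    (hbd : ∃ c : ℝ, ∀ F : Matrix (Fin 2) (Fin 2) ℝ, F.det = 1 → c ≤ W F)
    (φt : ℝ → ℝ) (heven : ∀ t : ℝ, φt (-t) = φt t)
    (hrep : ∀ F : Matrix (Fin 2) (Fin 2) ℝ, F.det = 1 →
      W F = φt (Real.sqrt (frobSq F - 2))) :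
    ∀ F : Matrix (Fin 2) (Fin 2) ℝ, F.det = 1 →
      convexEnvelopeSL2 W F = convexEnvelope φt (Real.sqrt (frobSq F - 2)) := by
  have hsqrt : ∀ x : ℝ, φt √(x ^ 2) = φt x := fun x => by
    rw [Real.sqrt_sq_eq_abs]
    rcases abs_choice x with h | h <;> rw [h]
    exact heven x
  obtain ⟨c, hc⟩ := hbd
  intro F hF
  obtain ⟨N, hN⟩ := exists_line F hF
  set t := √(frobSq F - 2) with ht
  have hline : ∀ s, W (F + (s - t) • N) = φt s := fun s => by
    rw [hrep _ (hN _).1, (hN _).2, hsqrt, add_sub_cancel]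
  have hφ : ∀ s, c ≤ φt s := fun s => hline s ▸ hc _ (hN _).1
  unfold convexEnvelopeSL2 convexEnvelope
  apply le_antisymm
  · refine csSup_le ⟨c, fun _ => c, convexOn_const c convex_univ, hc, rfl⟩ ?_
    rintro _ ⟨w, hw, hwW, rfl⟩
    refine le_csSup ⟨φt t, by rintro _ ⟨p, -, hp, rfl⟩; exact hp t⟩
      ⟨fun s => w (F + (s - t) • N), ?_, fun s => ?_, by simp⟩
    · refine ⟨convex_univ, fun x _ y _ a b ha hb hab => ?_⟩
      have := hw.2 (Set.mem_univ (F + (x - t) • N)) (Set.mem_univ (F + (y - t) • N)) ha hb hab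
      refine le_of_eq_of_le (congrArg w ?_) this
      obtain rfl : b = 1 - a := by linarith
      simp only [smul_eq_mul]
      module
    · exact (hwW _ (hN _).1).trans_eq (hline s)
  · refine csSup_le ⟨c, fun _ => c, convexOn_const c convex_univ, hφ, rfl⟩ ?_
    rintro _ ⟨p, hp, hpφ, rfl⟩
    obtain ⟨e, f, hef, h1, h2⟩ := exists_direction (F 0 0 - F 1 1) (F 0 1 + F 1 0)
    rw [← frobSq_sub_two F hF, ← ht] at h1 h2
    refine le_csSup ⟨W F, by rintro _ ⟨w, -, hw, rfl⟩; exact hw F hF⟩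
      ⟨fun X => p (e * (X 0 0 - X 1 1) + f * (X 0 1 + X 1 0)), ?_, fun X hX => ?_, ?_⟩
    · refine ⟨convex_univ, fun X _ Y _ a b ha hb hab => ?_⟩
      refine le_of_eq_of_le (congrArg p ?_) (hp.2 (Set.mem_univ _) (Set.mem_univ _) ha hb hab)
      simp only [Matrix.add_apply, Matrix.smul_apply, smul_eq_mul]
      ring
    · rw [hrep X hX]
      have hz := frobSq_sub_two X hX
      set ρ := √(frobSq X - 2) with hρ
      have habs : |e * (X 0 0 - X 1 1) + f * (X 0 1 + X 1 0)| ≤ ρ := by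
        -- Cauchy–Schwarz, via the Lagrange identity and `e² + f² = 1`
        refine Real.abs_le_sqrt ?_
        rw [hz]
        have := sq_nonneg (e * (X 0 1 + X 1 0) - f * (X 0 0 - X 1 1))
        linear_combination this + ((X 0 0 - X 1 1) ^ 2 + (X 0 1 + X 1 0) ^ 2) * hef
      refine (hp.le_max_of_mem_Icc (Set.mem_univ (-ρ)) (Set.mem_univ ρ) (abs_le.mp habs)).trans ?_
      exact max_le ((hpφ _).trans_eq (heven ρ)) (hpφ ρ)
    · refine congrArg p ?_
      rw [h1, h2]
      linear_combination -t * hef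
end

section
/- Let W : SL(2) → ℝ be objective, isotropic (W(RF) = W(FR) = W(F) for all F ∈ SL(2), R ∈ SO(2)) and bounded below, and let φ̃ : ℝ → ℝ be the even function with W(F) = φ̃(√(‖F‖² − 2)) for all F ∈ SL(2). Define RW(F) = sup{ w(F) : w : SL(2) → ℝ rank-one convex with w ≤ W on SL(2) } and CW(F) = sup{ w(F) : w : ℝ^{2×2} → ℝ convex with w ≤ W on SL(2) }. Then RW(F) = CW(F) = C φ̃(√(‖F‖² − 2)) for all F ∈ SL(2). -/
/-- The rank-one convex envelope of `W : SL(2) → ℝ`: the pointwise supremum of all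
rank-one convex functions on SL(2) lying below `W`. -/
noncomputable def rankOneConvexEnvelopeSL2 (W : Matrix (Fin 2) (Fin 2) ℝ → ℝ)
    (F : Matrix (Fin 2) (Fin 2) ℝ) : ℝ :=
  sSup {y : ℝ | ∃ w : Matrix (Fin 2) (Fin 2) ℝ → ℝ, RankOneConvexOnSL2 w ∧
    (∀ X : Matrix (Fin 2) (Fin 2) ℝ, X.det = 1 → w X ≤ W X) ∧ y = w F}

/-- The seminorm `√((F₀₀ - F₁₁)² + (F₀₁ + F₁₀)²)`, which measures the anticonformal part of `F` and
equals the difference of the singular values of `F` when `det F ≥ 0`. -/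
noncomputable def confDist (F : Matrix (Fin 2) (Fin 2) ℝ) : ℝ :=
  Real.sqrt ((F 0 0 - F 1 1) ^ 2 + (F 0 1 + F 1 0) ^ 2)

lemma confDist_nonneg (F : Matrix (Fin 2) (Fin 2) ℝ) : 0 ≤ confDist F := Real.sqrt_nonneg _

lemma confDist_eq (F : Matrix (Fin 2) (Fin 2) ℝ) (hF : F.det = 1) :
    confDist F = Real.sqrt (frobSq F - 2) := by
  unfold confDist frobSq
  rw [Matrix.det_fin_two] at hF
  congr 1
  simp only [Fin.sum_univ_two]
  linarith

lemma confDist_convexOn : ConvexOn ℝ Set.univ confDist := by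
  have key : ∀ F, confDist F =
      ‖(⟨F 0 0 - F 1 1, F 0 1 + F 1 0⟩ : ℂ)‖ := by
    intro F
    rw [Complex.norm_def, Complex.normSq_mk, confDist]
    congr 1
    ring
  refine ⟨convex_univ, fun x _ y _ a b ha hb _ => ?_⟩
  simp only [key, smul_eq_mul]
  calc _ = ‖a • (⟨x 0 0 - x 1 1, x 0 1 + x 1 0⟩ : ℂ) +
          b • (⟨y 0 0 - y 1 1, y 0 1 + y 1 0⟩ : ℂ)‖ := by
        congr 1
        apply Complex.ext <;> simp <;> ring
    _ ≤ _ := by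
        refine (norm_add_le _ _).trans ?_
        rw [norm_smul, norm_smul, Real.norm_of_nonneg ha, Real.norm_of_nonneg hb]

/-- A convex even function of `confDist` is convex: it is nondecreasing on `[0, ∞)`. -/
lemma convexOn_comp_confDist (q : ℝ → ℝ) (hq : ConvexOn ℝ Set.univ q) (heven : ∀ t, q (-t) = q t) :
    ConvexOn ℝ Set.univ (fun F => q (confDist F)) := by
  have mono : ∀ s t : ℝ, 0 ≤ s → s ≤ t → q s ≤ q t := by
    intro s t hs hst
    have hmem : s ∈ segment ℝ (-t) t := by
      rw [segment_eq_Icc (by linarith)]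
      exact ⟨by linarith, hst⟩
    have := hq.le_on_segment (Set.mem_univ _) (Set.mem_univ _) hmem
    rwa [heven, max_self] at this
  refine ⟨convex_univ, fun x _ y _ a b ha hb hab => ?_⟩
  exact (mono _ _ (confDist_nonneg _)
    (confDist_convexOn.2 (Set.mem_univ x) (Set.mem_univ y) ha hb hab)).trans
    (hq.2 (Set.mem_univ _) (Set.mem_univ _) ha hb hab)

lemma matrix_rank_ne_zero (H : Matrix (Fin 2) (Fin 2) ℝ) (h0 : H ≠ 0) : H.rank ≠ 0 := by
  intro h
  rw [Matrix.rank, Submodule.finrank_eq_zero, LinearMap.range_eq_bot] at h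
  exact h0 (Matrix.mulVec_injective (congrArg DFunLike.coe h |>.trans (by ext; simp)))

/-- The upper bound on the rank comes from `H * adjugate H = 0`, as `adjugate H ≠ 0` too. -/
lemma rank_eq_one_of_det_eq_zero (H : Matrix (Fin 2) (Fin 2) ℝ) (h0 : H ≠ 0) (hd : H.det = 0) :
    H.rank = 1 := by
  have h1 := matrix_rank_ne_zero H h0
  have hadj : H.adjugate ≠ 0 := by
    intro h
    apply h0
    have := Matrix.adjugate_adjugate H (by simp)
    rw [h] at this
    simpa using this.symm
  have h2 := matrix_rank_ne_zero _ hadj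
  have h3 := Matrix.rank_add_rank_le_card_of_mul_eq_zero
    (show H * H.adjugate = 0 by rw [Matrix.mul_adjugate, hd, zero_smul])
  rw [Fintype.card_fin] at h3
  omega

/-- The line of (rotated) simple shears through a given element `F` of SL(2). -/
lemma exists_shear_line (F : Matrix (Fin 2) (Fin 2) ℝ) (hF : F.det = 1) :
    ∃ H : Matrix (Fin 2) (Fin 2) ℝ, H ≠ 0 ∧ H.det = 0 ∧
      ∀ x : ℝ, (F + (x - confDist F) • H).det = 1 ∧ confDist (F + (x - confDist F) • H) = |x| := by
  -- `(u, v)` is the direction of the anticonformal part, an arbitrary unit vector if that vanishes.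
  obtain ⟨u, v, huv, hu, hv⟩ : ∃ u v : ℝ, u ^ 2 + v ^ 2 = 1 ∧
      F 0 0 - F 1 1 = confDist F * u ∧ F 0 1 + F 1 0 = confDist F * v := by
    have hsq : confDist F ^ 2 = (F 0 0 - F 1 1) ^ 2 + (F 0 1 + F 1 0) ^ 2 :=
      Real.sq_sqrt (by positivity)
    by_cases h : confDist F = 0
    · rw [h] at hsq ⊢
      exact ⟨1, 0, by norm_num, by nlinarith, by nlinarith⟩
    · refine ⟨(F 0 0 - F 1 1) / confDist F, (F 0 1 + F 1 0) / confDist F, ?_, ?_, ?_⟩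
      · field_simp
        exact hsq.symm
      · field_simp
      · field_simp
  set t := confDist F
  rw [Matrix.det_fin_two] at hF
  -- `F` has conformal part `p + i q` and anticonformal part `(t / 2) (u + i v)`.
  obtain ⟨p, hp⟩ : ∃ p, p = (F 0 0 + F 1 1) / 2 := ⟨_, rfl⟩
  obtain ⟨q, hq⟩ : ∃ q, q = (F 1 0 - F 0 1) / 2 := ⟨_, rfl⟩
  have e00 : F 0 0 = p + t / 2 * u := by linarith
  have e11 : F 1 1 = p - t / 2 * u := by linarith
  have e01 : F 0 1 = -q + t / 2 * v := by linarith
  have e10 : F 1 0 = q + t / 2 * v := by linarith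
  rw [e00, e11, e01, e10] at hF
  have hA : p ^ 2 + q ^ 2 = 1 + t ^ 2 / 4 := by linear_combination hF + t ^ 2 / 4 * huv
  -- The direction has anticonformal part `(u + i v) / 2` and a conformal part `m + i n` of the same
  -- modulus `1 / 2` (so that `det H = 0`), whose real inner product with `p + i q` is `t / 4`
  -- (so that the determinant is stationary along the line).
  obtain ⟨m, hm⟩ : ∃ m, m = (p * (t / 2) - q) / (2 * (1 + t ^ 2 / 4)) := ⟨_, rfl⟩
  obtain ⟨n, hn⟩ : ∃ n, n = (p + q * (t / 2)) / (2 * (1 + t ^ 2 / 4)) := ⟨_, rfl⟩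
  have hmn : m ^ 2 + n ^ 2 = 1 / 4 := by
    rw [hm, hn, div_pow, div_pow, ← add_div, div_eq_iff (by positivity)]
    linear_combination (1 + t ^ 2 / 4) * hA
  have hin : p * m + q * n = t / 4 := by
    rw [hm, hn, ← mul_div_assoc p, ← mul_div_assoc q, ← add_div, div_eq_iff (by positivity)]
    linear_combination t / 2 * hA
  refine ⟨!![m + u / 2, -n + v / 2; n + v / 2, m - u / 2], ?_, ?_, fun x => ⟨?_, ?_⟩⟩
  · intro h
    have h00 := congrFun (congrFun h 0) 0
    have h11 := congrFun (congrFun h 1) 1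
    have h01 := congrFun (congrFun h 0) 1
    have h10 := congrFun (congrFun h 1) 0
    simp at h00 h11 h01 h10
    have hm0 : m = 0 := by linarith
    have hn0 : n = 0 := by linarith
    norm_num [hm0, hn0] at hmn
  · rw [Matrix.det_fin_two]
    simp
    linear_combination hmn - huv / 4
  · rw [Matrix.det_fin_two]
    simp [e00, e11, e01, e10]
    linear_combination hA + 2 * (x - t) * hin + (x - t) ^ 2 * hmn - x ^ 2 / 4 * huv
  · rw [← Real.sqrt_sq_eq_abs, confDist]
    congr 1
    simp [e00, e11, e01, e10]
    linear_combination x ^ 2 * huv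

/-- Any rank-one convex function on SL(2) restricts to a convex function of the parameter of a line
contained in SL(2) with a rank-one direction. -/
lemma RankOneConvexOnSL2.convexOn_line {w : Matrix (Fin 2) (Fin 2) ℝ → ℝ}
    (hw : RankOneConvexOnSL2 w) (F H : Matrix (Fin 2) (Fin 2) ℝ) (s : ℝ) (h0 : H ≠ 0)
    (hd : H.det = 0) (hline : ∀ x : ℝ, (F + (x - s) • H).det = 1) :
    ConvexOn ℝ Set.univ (fun x : ℝ => w (F + (x - s) • H)) := by
  refine ⟨convex_univ, fun x _ y _ a b ha hb hab => ?_⟩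
  obtain rfl : a = 1 - b := by linarith
  simp only [smul_eq_mul]
  rcases eq_or_ne x y with rfl | hxy
  · apply le_of_eq
    rw [← add_mul, ← add_mul, hab, one_mul, one_mul]
  · have hrank : ((y - x) • H).rank = 1 := by
      apply rank_eq_one_of_det_eq_zero
      · exact smul_ne_zero (sub_ne_zero.2 hxy.symm) h0
      · rw [Matrix.det_smul, hd, mul_zero]
    have hend : F + (x - s) • H + (y - x) • H = F + (y - s) • H := by module
    have hmid : F + (x - s) • H + b • (y - x) • H = F + ((1 - b) * x + b * y - s) • H := by module
    have := hw (F + (x - s) • H) ((y - x) • H) hrank (hline x) (by rw [hend]; exact hline y) b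
      ⟨hb, by linarith⟩
    rwa [hend, hmid] at this

lemma ConvexOn.rankOneConvexOnSL2 {w : Matrix (Fin 2) (Fin 2) ℝ → ℝ}
    (hw : ConvexOn ℝ Set.univ w) : RankOneConvexOnSL2 w := by
  intro F H _ _ _ t ht
  have := hw.2 (Set.mem_univ F) (Set.mem_univ (F + H)) (sub_nonneg.2 ht.2) ht.1 (by ring)
  rwa [show (1 - t) • F + t • (F + H) = F + t • H by module] at this

/-- Theorem 3.5 (main relaxation result): for an objective, isotropic `W : SL(2) → ℝ`
bounded below with `W(F) = φ̃(√(‖F‖² − 2))`,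
`RW(F) = CW(F) = C φ̃(√(‖F‖² − 2))` for all `F ∈ SL(2)`. -/
theorem relaxation_of_objective_isotropic_on_SL2
    (W : Matrix (Fin 2) (Fin 2) ℝ → ℝ)
    (hobj : ∀ F R : Matrix (Fin 2) (Fin 2) ℝ, F.det = 1 → SO2 R →
      W (R * F) = W F ∧ W (F * R) = W F)
    (hbd : ∃ c : ℝ, ∀ F : Matrix (Fin 2) (Fin 2) ℝ, F.det = 1 → c ≤ W F)
    (φt : ℝ → ℝ) (heven : ∀ t : ℝ, φt (-t) = φt t)
    (hrep : ∀ F : Matrix (Fin 2) (Fin 2) ℝ, F.det = 1 →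
      W F = φt (Real.sqrt (frobSq F - 2))) :
    ∀ F : Matrix (Fin 2) (Fin 2) ℝ, F.det = 1 →
      rankOneConvexEnvelopeSL2 W F = convexEnvelopeSL2 W F ∧
      convexEnvelopeSL2 W F = convexEnvelope φt (Real.sqrt (frobSq F - 2)) := by
  intro F hF
  obtain ⟨c, hc⟩ := hbd
  rw [← confDist_eq F hF]
  have hrep' : ∀ X : Matrix (Fin 2) (Fin 2) ℝ, X.det = 1 → W X = φt (confDist X) :=
    fun X hX => by rw [hrep X hX, confDist_eq X hX]
  have φabs : ∀ x, φt |x| = φt x := fun x => by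
    rcases abs_choice x with h | h <;> rw [h]
    exact heven x
  obtain ⟨H, hH0, hHd, hline⟩ := exists_shear_line F hF
  have hφc : ∀ s, c ≤ φt s := fun s => by
    rw [← φabs s, ← (hline s).2, ← hrep' _ (hline s).1]
    exact hc _ (hline s).1
  have hCR : convexEnvelopeSL2 W F ≤ rankOneConvexEnvelopeSL2 W F := by
    apply csSup_le_csSup
    · exact ⟨W F, by rintro y ⟨w, -, h, rfl⟩; exact h F hF⟩
    · exact ⟨c, fun _ => c, convexOn_const c convex_univ, hc, rfl⟩
    · rintro y ⟨w, hw, h, rfl⟩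
      exact ⟨w, hw.rankOneConvexOnSL2, h, rfl⟩
  have hRφ : rankOneConvexEnvelopeSL2 W F ≤ convexEnvelope φt (confDist F) := by
    apply csSup_le_csSup
    · exact ⟨φt (confDist F), by rintro y ⟨p, -, h, rfl⟩; exact h _⟩
    · exact ⟨c, fun _ => c, (convexOn_const c convex_univ).rankOneConvexOnSL2, hc, rfl⟩
    · rintro y ⟨w, hw, h, rfl⟩
      refine ⟨_, hw.convexOn_line F H (confDist F) hH0 hHd (fun x => (hline x).1), fun s => ?_, ?_⟩
      · refine (h _ (hline s).1).trans_eq ?_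
        rw [hrep' _ (hline s).1, (hline s).2, φabs]
      · simp
  have hφC : convexEnvelope φt (confDist F) ≤ convexEnvelopeSL2 W F := by
    apply csSup_le
    · exact ⟨c, fun _ => c, convexOn_const c convex_univ, hφc, rfl⟩
    · rintro y ⟨p, hp, h, rfl⟩
      have hneg : ConvexOn ℝ Set.univ (fun t => p (-t)) := by
        exact hp.comp_linearMap (-LinearMap.id : ℝ →ₗ[ℝ] ℝ)
      refine le_csSup_of_le ⟨W F, by rintro y ⟨w, -, h, rfl⟩; exact h F hF⟩
        ⟨_, convexOn_comp_confDist (fun t => max (p t) (p (-t))) (hp.sup hneg)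
          (fun t => by simp [max_comm]), fun X hX => ?_, rfl⟩ (le_max_left _ _)
      rw [hrep' X hX]
      exact max_le (h _) ((h _).trans_eq (heven _))
  exact ⟨le_antisymm (hRφ.trans hφC) hCR, le_antisymm (hCR.trans hRφ) hφC⟩
end

section
/- Let g : [0,∞) → ℝ be bounded below, let g̃ : ℝ → ℝ be its even extension g̃(t) = g(|t|), and define W̄ : ℝ^{2×2} → ℝ by W̄(F) = g(√(‖F‖² − 2·det F)). Then the convex envelope of W̄ satisfies C W̄(F) = C g̃(√(‖F‖² − 2·det F)) for all F ∈ ℝ^{2×2}, where C W̄(F) = sup{ w(F) : w : ℝ^{2×2} → ℝ convex with w ≤ W̄ } and C g̃(t) = sup{ p(t) : p : ℝ → ℝ convex with p ≤ g̃ }. -/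
/-- The convex envelope of `W̄ : ℝ^{2×2} → ℝ`: the pointwise supremum of all convex
minorants on `ℝ^{2×2}`. -/
noncomputable def convexEnvelopeM (Wb : Matrix (Fin 2) (Fin 2) ℝ → ℝ)
    (F : Matrix (Fin 2) (Fin 2) ℝ) : ℝ :=
  sSup {y : ℝ | ∃ w : Matrix (Fin 2) (Fin 2) ℝ → ℝ, ConvexOn ℝ Set.univ w ∧
    (∀ X : Matrix (Fin 2) (Fin 2) ℝ, w X ≤ Wb X) ∧ y = w F}

/-- The anticonformal part of a real 2×2 matrix, `(F₁₁ − F₂₂) + i (F₁₂ + F₂₁)`. -/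
noncomputable def anticonformalPart : Matrix (Fin 2) (Fin 2) ℝ →ₗ[ℝ] ℂ where
  toFun F := ⟨F 0 0 - F 1 1, F 0 1 + F 1 0⟩
  map_add' X Y := by
    apply Complex.ext <;> simp <;> ring
  map_smul' a X := by
    apply Complex.ext <;> simp <;> ring

lemma sqrt_frobSq_sub (F : Matrix (Fin 2) (Fin 2) ℝ) :
    Real.sqrt (frobSq F - 2 * F.det) = ‖anticonformalPart F‖ := by
  rw [Complex.norm_def]
  congr 1
  simp only [frobSq, Fin.sum_univ_two, Matrix.det_fin_two, anticonformalPart, LinearMap.coe_mk,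
    AddHom.coe_mk, Complex.normSq_mk]
  ring

/-- There is a matrix `E` with unit anticonformal part, aligned with that of `F`; along the line
through `F` in direction `E` the norm of the anticonformal part is an absolute value. -/
lemma exists_direction_s12 (F : Matrix (Fin 2) (Fin 2) ℝ) :
    ∃ E : Matrix (Fin 2) (Fin 2) ℝ, ∀ s : ℝ,
      ‖anticonformalPart (F + (s - ‖anticonformalPart F‖) • E)‖ = |s| := by
  set z := anticonformalPart F with hz
  obtain ⟨e, he, hze⟩ : ∃ e : ℂ, ‖e‖ = 1 ∧ z = (‖z‖ : ℝ) • e := by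
    by_cases h : z = 0
    · exact ⟨1, by simp, by simp [h]⟩
    · have h' : ‖z‖ ≠ 0 := norm_ne_zero_iff.mpr h
      exact ⟨‖z‖⁻¹ • z, by rw [norm_smul, norm_inv, norm_norm, inv_mul_cancel₀ h'],
        by rw [smul_smul, mul_inv_cancel₀ h', one_smul]⟩
  refine ⟨!![e.re / 2, e.im / 2; e.im / 2, -(e.re / 2)], fun s => ?_⟩
  have hE : anticonformalPart !![e.re / 2, e.im / 2; e.im / 2, -(e.re / 2)] = e := by
    apply Complex.ext <;> simp [anticonformalPart]
  have hline : z + (s - ‖z‖) • e = s • e := by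
    nth_rewrite 1 [hze]
    rw [← add_smul]
    congr 1
    ring
  rw [map_add, map_smul, hE, ← hz, hline, norm_smul, he, mul_one, Real.norm_eq_abs]

/-- The symmetrisation of a convex function on `ℝ`, composed with the norm of the
anticonformal part, is convex: an even convex function is monotone on `[0, ∞)`. -/
lemma convexOn_symm_comp_norm {p : ℝ → ℝ} (hp : ConvexOn ℝ Set.univ p) :
    ConvexOn ℝ Set.univ (fun X => max (p ‖anticonformalPart X‖) (p (-‖anticonformalPart X‖))) := by
  have hneg : ConvexOn ℝ Set.univ (fun s => p (-s)) :=
    hp.comp_linearMap (-LinearMap.id)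
  have hq := hp.sup hneg
  refine ⟨convex_univ, fun X _ Y _ a b ha hb hab => ?_⟩
  set r := ‖anticonformalPart (a • X + b • Y)‖
  set s := a * ‖anticonformalPart X‖ + b * ‖anticonformalPart Y‖ with hs
  have hr : 0 ≤ r := norm_nonneg _
  have hrs : r ≤ s := by
    calc r = ‖a • anticonformalPart X + b • anticonformalPart Y‖ := by simp [r]
      _ ≤ _ := norm_add_le _ _
      _ = s := by rw [norm_smul, norm_smul, Real.norm_of_nonneg ha, Real.norm_of_nonneg hb]
  have h1 : p r ≤ max (p (-s)) (p s) :=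
    hp.le_max_of_mem_Icc (Set.mem_univ _) (Set.mem_univ _) ⟨by linarith, hrs⟩
  have h2 : p (-r) ≤ max (p (-s)) (p s) :=
    hp.le_max_of_mem_Icc (Set.mem_univ _) (Set.mem_univ _) ⟨by linarith, by linarith⟩
  calc max (p r) (p (-r)) ≤ max (p s) (p (-s)) := by
        rw [max_comm (p s)]; exact max_le h1 h2
    _ ≤ _ := hq.2 (Set.mem_univ _) (Set.mem_univ _) ha hb hab

/-- The convex-envelope part of Proposition 3.2 (Dacorogna–Koshigoe): for
`W̄(F) = g(√(‖F‖² − 2 det F))` with `g` bounded below and `g̃(t) = g(|t|)`,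
`C W̄(F) = C g̃(√(‖F‖² − 2 det F))` for all `F`. -/
theorem convexEnvelope_of_conformal_type_energy
    (g : ℝ → ℝ) (hbd : ∃ c : ℝ, ∀ t : ℝ, 0 ≤ t → c ≤ g t) :
    ∀ F : Matrix (Fin 2) (Fin 2) ℝ,
      convexEnvelopeM (fun X => g (Real.sqrt (frobSq X - 2 * X.det))) F =
        convexEnvelope (fun s => g |s|) (Real.sqrt (frobSq F - 2 * F.det)) := by
  intro F
  obtain ⟨c, hc⟩ := hbd
  simp only [sqrt_frobSq_sub, convexEnvelopeM, convexEnvelope]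
  apply le_antisymm
  · apply csSup_le
    · exact ⟨c, fun _ => c, convexOn_const c convex_univ, fun X => hc _ (norm_nonneg _), rfl⟩
    rintro _ ⟨w, hw, hle, rfl⟩
    obtain ⟨E, hE⟩ := exists_direction_s12 F
    refine le_csSup ⟨g |‖anticonformalPart F‖|, ?_⟩
      ⟨fun s => w (F + (s - ‖anticonformalPart F‖) • E), ?_, fun s => ?_, by simp⟩
    · rintro _ ⟨p, -, hp, rfl⟩
      exact hp _
    · refine ⟨convex_univ, fun x _ y _ a b ha hb hab => ?_⟩
      have hcomb : F + (a • x + b • y - ‖anticonformalPart F‖) • E =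
          a • (F + (x - ‖anticonformalPart F‖) • E) +
            b • (F + (y - ‖anticonformalPart F‖) • E) := by
        obtain rfl : b = 1 - a := by linarith
        simp only [smul_eq_mul]
        module
      simp only [hcomb]
      exact hw.2 (Set.mem_univ _) (Set.mem_univ _) ha hb hab
    · simpa only [hE s] using hle (F + (s - ‖anticonformalPart F‖) • E)
  · apply csSup_le
    · exact ⟨c, fun _ => c, convexOn_const c convex_univ, fun X => hc _ (abs_nonneg _), rfl⟩
    rintro _ ⟨p, hp, hle, rfl⟩
    refine le_csSup_of_le ⟨g ‖anticonformalPart F‖, ?_⟩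
      ⟨_, convexOn_symm_comp_norm hp, fun X => max_le ?_ ?_, rfl⟩ (le_max_left _ _)
    · rintro _ ⟨w, -, hw, rfl⟩
      exact hw _
    · simpa using hle ‖anticonformalPart X‖
    · simpa using hle (-‖anticonformalPart X‖)
end

section
/- Let g : [0,∞) → ℝ be bounded below, let g̃(t) = g(|t|), and define W̄ : ℝ^{2×2} → ℝ by W̄(F) = g(√(‖F‖² − 2·det F)). Then the rank-one convex envelope of W̄ equals its convex envelope: R W̄(F) = C W̄(F) = C g̃(√(‖F‖² − 2·det F)) for all F ∈ ℝ^{2×2}, where R W̄(F) = sup{ w(F) : w : ℝ^{2×2} → ℝ rank-one convex with w ≤ W̄ }. -/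
/-- Rank-one convexity of a function on `ℝ^{2×2}`. -/
def RankOneConvexM (w : Matrix (Fin 2) (Fin 2) ℝ → ℝ) : Prop :=
  ∀ F H : Matrix (Fin 2) (Fin 2) ℝ, H.rank = 1 →
    ∀ t ∈ Set.Icc (0 : ℝ) 1,
      w ((1 - t) • F + t • (F + H)) ≤ (1 - t) * w F + t * w (F + H)

/-- The rank-one convex envelope of `W̄ : ℝ^{2×2} → ℝ`. -/
noncomputable def rankOneConvexEnvelopeM (Wb : Matrix (Fin 2) (Fin 2) ℝ → ℝ)
    (F : Matrix (Fin 2) (Fin 2) ℝ) : ℝ :=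
  sSup {y : ℝ | ∃ w : Matrix (Fin 2) (Fin 2) ℝ → ℝ, RankOneConvexM w ∧
    (∀ X : Matrix (Fin 2) (Fin 2) ℝ, w X ≤ Wb X) ∧ y = w F}

/-- The linear map `z(F) = (F₀₀ - F₁₁) + i (F₀₁ + F₁₀)`, whose kernel is the set of conformal
matrices and for which `|z(F)|² = ‖F‖² - 2 det F`. -/
noncomputable def conformalDefect : Matrix (Fin 2) (Fin 2) ℝ →ₗ[ℝ] ℂ where
  toFun F := ⟨F 0 0 - F 1 1, F 0 1 + F 1 0⟩
  map_add' F G := by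
    apply Complex.ext <;> simp <;> ring
  map_smul' c F := by
    apply Complex.ext <;> simp <;> ring

lemma sqrt_frobSq_sub_eq (F : Matrix (Fin 2) (Fin 2) ℝ) :
    Real.sqrt (frobSq F - 2 * F.det) = ‖conformalDefect F‖ := by
  rw [Complex.norm_eq_sqrt_sq_add_sq]
  congr 1
  simp only [frobSq, Matrix.det_fin_two, Fin.sum_univ_two, conformalDefect, LinearMap.coe_mk,
    AddHom.coe_mk]
  ring

lemma one_le_rank_of_ne_zero {A : Matrix (Fin 2) (Fin 2) ℝ} (hA : A ≠ 0) : 1 ≤ A.rank := by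
  rw [Nat.one_le_iff_ne_zero]
  intro h
  apply hA
  rw [Matrix.rank, Submodule.finrank_eq_zero, LinearMap.range_eq_bot] at h
  apply Matrix.mulVec_injective
  funext v
  simpa using LinearMap.congr_fun h v

/-- A nonzero singular 2×2 matrix has rank one: it and its adjugate are nonzero with product zero,
so their ranks are positive with sum at most two. -/
lemma rank_eq_one_of_det_eq_zero_s13 {A : Matrix (Fin 2) (Fin 2) ℝ} (hA : A ≠ 0) (hdet : A.det = 0) :
    A.rank = 1 := by
  have hadj : A.adjugate ≠ 0 := by
    intro h
    apply hA
    have h' := Matrix.adjugate_adjugate A (by simp)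
    rw [h] at h'
    simpa using h'.symm
  have hmul : A * A.adjugate = 0 := by rw [Matrix.mul_adjugate, hdet, zero_smul]
  have hsum := Matrix.rank_add_rank_le_card_of_mul_eq_zero hmul
  have h₁ := one_le_rank_of_ne_zero hA
  have h₂ := one_le_rank_of_ne_zero hadj
  simp only [Fintype.card_fin] at hsum
  omega

/-- For `u = cos θ + i sin θ`, the orthogonal projection onto the line at angle `θ / 2`. -/
noncomputable def symProj (u : ℂ) : Matrix (Fin 2) (Fin 2) ℝ :=
  !![(1 + u.re) / 2, u.im / 2; u.im / 2, (1 - u.re) / 2]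

lemma conformalDefect_symProj (u : ℂ) : conformalDefect (symProj u) = u := by
  apply Complex.ext <;> simp [conformalDefect, symProj]
  ring

lemma rank_symProj {u : ℂ} (hu : ‖u‖ = 1) {c : ℝ} (hc : c ≠ 0) : (c • symProj u).rank = 1 := by
  have hsq : u.re ^ 2 + u.im ^ 2 = 1 := by
    have h := Complex.sq_norm u
    rw [hu, Complex.normSq_apply] at h
    linarith
  apply rank_eq_one_of_det_eq_zero_s13
  · apply smul_ne_zero hc
    intro h
    have h' := conformalDefect_symProj u
    rw [h, map_zero] at h'
    simp [← h'] at hu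
  · rw [Matrix.det_smul, Matrix.det_fin_two]
    simp only [symProj, Matrix.of_apply, Matrix.cons_val', Matrix.cons_val_zero,
      Matrix.cons_val_one, Matrix.cons_val_fin_one]
    linear_combination (-c ^ Fintype.card (Fin 2) / 4) * hsq

lemma exists_unit_direction (z : ℂ) : ∃ u : ℂ, ‖u‖ = 1 ∧ z = (‖z‖ : ℝ) • u := by
  rcases eq_or_ne z 0 with rfl | hz
  · exact ⟨1, by simp, by simp⟩
  · have hz' : ‖z‖ ≠ 0 := norm_ne_zero_iff.mpr hz
    exact ⟨(‖z‖⁻¹ : ℝ) • z, by simp [hz'],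
      by rw [smul_smul, mul_inv_cancel₀ hz', one_smul]⟩

/-- A rank-one convex function is convex along every line in direction `symProj u`, `|u| = 1`. -/
lemma RankOneConvexM.convexOn_line {w : Matrix (Fin 2) (Fin 2) ℝ → ℝ} (hw : RankOneConvexM w)
    (F : Matrix (Fin 2) (Fin 2) ℝ) (r : ℝ) {u : ℂ} (hu : ‖u‖ = 1) :
    ConvexOn ℝ Set.univ fun s : ℝ => w (F + (s - r) • symProj u) := by
  refine ⟨convex_univ, fun x _ y _ a b ha hb hab => ?_⟩
  obtain rfl : a = 1 - b := by linarith
  rcases eq_or_ne x y with rfl | hxy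
  · simp only [smul_eq_mul]
    rw [← add_mul, ← add_mul, hab, one_mul, one_mul]
  · have h := hw (F + (x - r) • symProj u) ((y - x) • symProj u)
      (rank_symProj hu (sub_ne_zero.mpr hxy.symm)) b ⟨hb, by linarith⟩
    have hy : F + (x - r) • symProj u + (y - x) • symProj u = F + (y - r) • symProj u := by module
    have hm : (1 - b) • (F + (x - r) • symProj u) + b • (F + (y - r) • symProj u) =
        F + (((1 - b) * x + b * y) - r) • symProj u := by module
    rw [hy, hm] at h
    exact h

lemma ConvexOn.rankOneConvexM {w : Matrix (Fin 2) (Fin 2) ℝ → ℝ} (hw : ConvexOn ℝ Set.univ w) :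
    RankOneConvexM w := fun F H _ t ht =>
  hw.2 (Set.mem_univ F) (Set.mem_univ (F + H)) (sub_nonneg.mpr ht.2) ht.1 (by ring)

/-- The symmetrization of a convex function on `ℝ`, composed with `F ↦ |z(F)|`, is convex. -/
lemma convexOn_symmetrization {p : ℝ → ℝ} (hp : ConvexOn ℝ Set.univ p) :
    ConvexOn ℝ Set.univ fun X : Matrix (Fin 2) (Fin 2) ℝ =>
      max (p ‖conformalDefect X‖) (p (-‖conformalDefect X‖)) := by
  have hneg : ConvexOn ℝ Set.univ fun t : ℝ => p (-t) :=
    hp.comp_linearMap (-LinearMap.id : ℝ →ₗ[ℝ] ℝ)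
  have hq : ConvexOn ℝ Set.univ fun t : ℝ => max (p t) (p (-t)) := hp.sup hneg
  have hN : ConvexOn ℝ Set.univ fun X : Matrix (Fin 2) (Fin 2) ℝ => ‖conformalDefect X‖ :=
    (convexOn_univ_norm (E := ℂ)).comp_linearMap conformalDefect
  -- An even convex function satisfies `q x ≤ max (q (-y)) (q y) = q y` for `0 ≤ x ≤ y`.
  have hmono : ∀ x y : ℝ, 0 ≤ x → x ≤ y → max (p x) (p (-x)) ≤ max (p y) (p (-y)) := by
    intro x y hx hxy
    have h := hq.le_max_of_mem_Icc (Set.mem_univ (-y)) (Set.mem_univ y)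
      (z := x) ⟨by linarith, hxy⟩
    simpa [max_comm (p (-y)) (p y)] using h
  refine ⟨convex_univ, fun X hX Y hY a b ha hb hab => ?_⟩
  exact (hmono _ _ (norm_nonneg _) (hN.2 hX hY ha hb hab)).trans
    (hq.2 (Set.mem_univ _) (Set.mem_univ _) ha hb hab)

/-- The rank-one part of Proposition 3.2 (Dacorogna–Koshigoe): for
`W̄(F) = g(√(‖F‖² − 2 det F))` with `g` bounded below and `g̃(t) = g(|t|)`,
`R W̄(F) = C W̄(F) = C g̃(√(‖F‖² − 2 det F))` for all `F`. -/
theorem rankOneConvexEnvelope_of_conformal_type_energy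
    (g : ℝ → ℝ) (hbd : ∃ c : ℝ, ∀ t : ℝ, 0 ≤ t → c ≤ g t) :
    ∀ F : Matrix (Fin 2) (Fin 2) ℝ,
      rankOneConvexEnvelopeM (fun X => g (Real.sqrt (frobSq X - 2 * X.det))) F =
        convexEnvelopeM (fun X => g (Real.sqrt (frobSq X - 2 * X.det))) F ∧
      convexEnvelopeM (fun X => g (Real.sqrt (frobSq X - 2 * X.det))) F =
        convexEnvelope (fun s => g |s|) (Real.sqrt (frobSq F - 2 * F.det)) := by
  intro F
  obtain ⟨c, hc⟩ := hbd
  simp only [sqrt_frobSq_sub_eq]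
  have h₁ : convexEnvelopeM (fun X => g ‖conformalDefect X‖) F ≤
      rankOneConvexEnvelopeM (fun X => g ‖conformalDefect X‖) F := by
    refine csSup_le_csSup ⟨g ‖conformalDefect F‖, ?_⟩ ⟨c, fun _ => c, convexOn_const c convex_univ,
      fun X => hc _ (norm_nonneg _), rfl⟩ ?_
    · rintro y ⟨w, -, hle, rfl⟩
      exact hle F
    · rintro y ⟨w, hw, hle, rfl⟩
      exact ⟨w, hw.rankOneConvexM, hle, rfl⟩
  have h₂ : rankOneConvexEnvelopeM (fun X => g ‖conformalDefect X‖) F ≤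
      convexEnvelope (fun s => g |s|) ‖conformalDefect F‖ := by
    refine csSup_le_csSup ⟨g |‖conformalDefect F‖|, ?_⟩ ⟨c, fun _ => c,
      (convexOn_const c convex_univ).rankOneConvexM, fun X => hc _ (norm_nonneg _), rfl⟩ ?_
    · rintro y ⟨p, -, hle, rfl⟩
      exact hle _
    · rintro y ⟨w, hw, hle, rfl⟩
      obtain ⟨u, hu, hz⟩ := exists_unit_direction (conformalDefect F)
      refine ⟨_, hw.convexOn_line F ‖conformalDefect F‖ hu, fun s => ?_, by simp⟩
      have hline : ‖conformalDefect (F + (s - ‖conformalDefect F‖) • symProj u)‖ = |s| := by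
        rw [map_add, map_smul, conformalDefect_symProj]
        nth_rewrite 1 [hz]
        rw [← add_smul, norm_smul, hu, mul_one, add_sub_cancel, Real.norm_eq_abs]
      simpa only [hline] using hle (F + (s - ‖conformalDefect F‖) • symProj u)
  have h₃ : convexEnvelope (fun s => g |s|) ‖conformalDefect F‖ ≤
      convexEnvelopeM (fun X => g ‖conformalDefect X‖) F := by
    refine csSup_le ⟨c, fun _ => c, convexOn_const c convex_univ,
      fun s => hc _ (abs_nonneg s), rfl⟩ ?_
    rintro y ⟨p, hp, hle, rfl⟩
    refine (le_max_left _ (p (-‖conformalDefect F‖))).trans (le_csSup ⟨g ‖conformalDefect F‖, ?_⟩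
      ⟨_, convexOn_symmetrization hp, fun X => max_le ?_ ?_, rfl⟩)
    · rintro y ⟨w, -, hw, rfl⟩
      exact hw F
    · simpa using hle ‖conformalDefect X‖
    · simpa using hle (-‖conformalDefect X‖)
  exact ⟨le_antisymm (h₂.trans h₃) h₁, le_antisymm (h₁.trans h₂) h₃⟩
end

section
/- Let g : [0,∞) → ℝ be continuous and bounded below, let g̃(t) = g(|t|), and define W̄ : ℝ^{2×2} → ℝ by W̄(F) = g(√(‖F‖² − 2·det F)). Then the quasiconvex envelope of W̄ (taken over continuous quasiconvex minorants) equals C g̃(√(‖F‖² − 2·det F)) for all F ∈ ℝ^{2×2}: sup{ w(F) : w : ℝ^{2×2} → ℝ continuous and quasiconvex with w ≤ W̄ } = C g̃(√(‖F‖² − 2·det F)). -/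
/-!
Write `conf F = (a - d) + (b + c) i` for `F = (a b; c d)`. This is linear in `F`, and
`√(‖F‖² - 2 det F) = ‖conf F‖`, so the energy is `g ‖conf F‖`.

*The quasiconvex envelope is at least the convex one.* Given a convex `p ≤ g̃`, the function
`q s = max (p s) (p (-s))` is an even convex minorant of `g̃` with `p ≤ q`. Hence `z ↦ q ‖z‖` is
convex on `ℂ` (`convexOn_even_comp_norm`), and `F ↦ q ‖conf F‖` is quasiconvex by Jensen's
inequality, because gradients of test maps have mean zero (`quasiconvex_comp_conf`).

*The quasiconvex envelope is at most the convex one.* Let `w` be a continuous quasiconvex minorant,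
`conf F = t e` with `|e| = 1` and `t ≥ 0`. Along the rank-one line `s ↦ F + (s - t) e ⊗ e₀` the
quantity `conf` equals `s e`, so `p s = w (F + (s - t) e ⊗ e₀)` satisfies `p ≤ g̃` and `p t = w F`.
It remains to see that `p` is convex (`quasiconvex_convexOn_line`). Testing quasiconvexity with
`ε sin(x₀) e` cut off near the boundary of a large box gives, as the box grows, that `2π p s` is at
most the integral of `p (s + ε cos t)` over a period (`quasiconvex_cos_mean`). A continuous function
with this property for all `s` and `ε` is convex by a maximum principle (`convexOn_of_cos_mean`).
-/


open MeasureTheory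

/-- The gradient (Jacobian matrix) of a map `θ : ℝ² → ℝ²` at a point `x`. -/
noncomputable def gradMatrix (θ : (Fin 2 → ℝ) → (Fin 2 → ℝ)) (x : Fin 2 → ℝ) :
    Matrix (Fin 2) (Fin 2) ℝ :=
  Matrix.of fun i j => fderiv ℝ θ x (Pi.single j 1) i

/-- Quasiconvexity in the sense of Morrey for a continuous function on `ℝ^{2×2}`. -/
def QuasiconvexMorrey (w : Matrix (Fin 2) (Fin 2) ℝ → ℝ) : Prop :=
  ∀ Ω : Set (Fin 2 → ℝ), IsOpen Ω → Bornology.IsBounded Ω →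
    ∀ F₀ : Matrix (Fin 2) (Fin 2) ℝ, ∀ θ : (Fin 2 → ℝ) → (Fin 2 → ℝ),
      ContDiff ℝ (⊤ : ℕ∞) θ → HasCompactSupport θ → tsupport θ ⊆ Ω →
      (volume Ω).toReal * w F₀ ≤ ∫ x in Ω, w (F₀ + gradMatrix θ x)

/-! ### Quasiconvexity of convex functions of the anticonformal part -/

/-- Twice the anticonformal part of a real 2×2 matrix: for `F = (a b; c d)` this is
`(a - d) + (b + c) i`, a linear function of `F` whose modulus is `√(‖F‖² - 2 det F)`. -/
noncomputable def conf (F : Matrix (Fin 2) (Fin 2) ℝ) : ℂ := ⟨F 0 0 - F 1 1, F 0 1 + F 1 0⟩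

lemma norm_conf (F : Matrix (Fin 2) (Fin 2) ℝ) :
    ‖conf F‖ = Real.sqrt (frobSq F - 2 * F.det) := by
  rw [Complex.norm_eq_sqrt_sq_add_sq, conf, frobSq, Matrix.det_fin_two]
  simp only [Fin.sum_univ_two]
  congr 1
  ring

lemma conf_add (F G : Matrix (Fin 2) (Fin 2) ℝ) : conf (F + G) = conf F + conf G := by
  apply Complex.ext <;> simp [conf] <;> ring

lemma continuous_conf : Continuous conf := by
  have h : conf = fun F : Matrix (Fin 2) (Fin 2) ℝ =>
      ((F 0 0 - F 1 1 : ℝ) : ℂ) + ((F 0 1 + F 1 0 : ℝ) : ℂ) * Complex.I := by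
    funext F
    apply Complex.ext <;> simp [conf]
  rw [h]
  fun_prop

lemma continuous_gradMatrix {θ : (Fin 2 → ℝ) → (Fin 2 → ℝ)} (hθ : ContDiff ℝ (⊤ : ℕ∞) θ) :
    Continuous (gradMatrix θ) := by
  have h := hθ.continuous_fderiv (by simp)
  refine continuous_pi fun i => continuous_pi fun j => ?_
  exact (continuous_apply i).comp (h.clm_apply continuous_const)

/-- The gradient of a test map has mean zero, by integration by parts against the constant `1`. -/
lemma integral_gradMatrix_eq_zero {Ω : Set (Fin 2 → ℝ)} {θ : (Fin 2 → ℝ) → (Fin 2 → ℝ)}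
    (hθ : ContDiff ℝ (⊤ : ℕ∞) θ) (hc : HasCompactSupport θ) (hs : tsupport θ ⊆ Ω) (i j : Fin 2) :
    ∫ x in Ω, gradMatrix θ x i j = 0 := by
  have hd : Differentiable ℝ θ := hθ.differentiable (by simp)
  have hsupp : ∀ x, x ∉ Ω → gradMatrix θ x i j = 0 := by
    intro x hx
    have : fderiv ℝ θ x = 0 := by
      by_contra h
      exact hx (hs (support_fderiv_subset ℝ h))
    simp [gradMatrix, this]
  rw [setIntegral_eq_integral_of_forall_compl_eq_zero hsupp]
  set f : (Fin 2 → ℝ) → ℝ := fun x => θ x i with hf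
  have hfd : Differentiable ℝ f := fun x => differentiableAt_pi.1 (hd x) i
  have hfc : HasCompactSupport f := hc.comp_left (g := fun y : Fin 2 → ℝ => y i) rfl
  have hfs : ContDiff ℝ (⊤ : ℕ∞) f := contDiff_pi.1 hθ i
  have hcf : Continuous (fun x => fderiv ℝ f x (Pi.single j 1)) :=
    (hfs.continuous_fderiv (by simp)).clm_apply continuous_const
  have hccf : HasCompactSupport (fun x => fderiv ℝ f x (Pi.single j 1)) :=
    hfc.fderiv_apply ℝ _
  have heq : ∀ x, gradMatrix θ x i j = fderiv ℝ f x (Pi.single j 1) := by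
    intro x
    have := fderiv_apply (hd x) i
    simp [gradMatrix, hf, this]
  simp_rw [heq]
  have := integral_mul_fderiv_eq_neg_fderiv_mul_of_integrable (𝕜 := ℝ) (μ := volume)
    (f := fun _ : Fin 2 → ℝ => (1 : ℝ)) (g := f) (v := Pi.single j 1)
    (by simp) (by simpa using hcf.integrable_of_hasCompactSupport hccf)
    (by simpa using hfs.continuous.integrable_of_hasCompactSupport hfc)
    (fun x _ => by fun_prop) (fun x _ => hfd x)
  simpa using this

lemma continuous_integrableOn_bounded {E : Type*} [NormedAddCommGroup E] {Ω : Set (Fin 2 → ℝ)}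
    (hb : Bornology.IsBounded Ω) {f : (Fin 2 → ℝ) → E} (hf : Continuous f) :
    IntegrableOn f Ω :=
  (hf.continuousOn.integrableOn_compact hb.isCompact_closure).mono_set subset_closure

/-- A convex function of the anticonformal part is quasiconvex, by Jensen's inequality. -/
lemma quasiconvex_comp_conf {v : ℂ → ℝ} (hv : ConvexOn ℝ Set.univ v) :
    QuasiconvexMorrey (fun F => v (conf F)) := by
  intro Ω hΩ hb F₀ θ hθ hc hs
  have hvc : Continuous v := continuousOn_univ.1 (hv.continuousOn isOpen_univ)
  by_cases h0 : volume Ω = 0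
  · simp [h0, Measure.restrict_eq_zero.2 h0]
  have hfin : volume Ω ≠ ⊤ := hb.measure_lt_top.ne
  have hpos : 0 < (volume Ω).toReal := ENNReal.toReal_pos h0 hfin
  have hG := continuous_gradMatrix hθ
  have hGij : ∀ i j, Continuous fun x => gradMatrix θ x i j := fun i j =>
    hG.matrix_elem i j
  have hcc : Continuous fun x => conf (F₀ + gradMatrix θ x) :=
    continuous_conf.comp (continuous_const.add hG)
  have hzero : ∫ x in Ω, conf (gradMatrix θ x) = 0 := by
    have hI := fun i j => continuous_integrableOn_bounded hb (hGij i j)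
    have e : ∀ x, conf (gradMatrix θ x) =
        (gradMatrix θ x 0 0 - gradMatrix θ x 1 1) • (1 : ℂ) +
        (gradMatrix θ x 0 1 + gradMatrix θ x 1 0) • Complex.I := by
      intro x
      apply Complex.ext <;> simp [conf]
    simp_rw [e]
    have h1 : IntegrableOn (fun x => gradMatrix θ x 0 0 - gradMatrix θ x 1 1) Ω :=
      (hI 0 0).sub (hI 1 1)
    have h2 : IntegrableOn (fun x => gradMatrix θ x 0 1 + gradMatrix θ x 1 0) Ω :=
      (hI 0 1).add (hI 1 0)
    rw [integral_add (h1.smul_const _) (h2.smul_const _),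
      integral_smul_const, integral_smul_const, integral_sub (hI 0 0) (hI 1 1),
      integral_add (hI 0 1) (hI 1 0)]
    simp [integral_gradMatrix_eq_zero hθ hc hs]
  have havg : ⨍ x in Ω, conf (F₀ + gradMatrix θ x) = conf F₀ := by
    simp_rw [conf_add]
    have hci : IntegrableOn (fun x => conf (gradMatrix θ x)) Ω :=
      continuous_integrableOn_bounded hb (continuous_conf.comp hG)
    have hcc₀ : IntegrableOn (fun _ : Fin 2 → ℝ => conf F₀) Ω :=
      continuous_integrableOn_bounded hb continuous_const
    rw [setAverage_eq, integral_add hcc₀ hci, hzero]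
    simp only [setIntegral_const, add_zero, Measure.real]
    rw [smul_smul, inv_mul_cancel₀ hpos.ne', one_smul]
  have := hv.map_set_average_le (μ := volume) (t := Ω) (f := fun x => conf (F₀ + gradMatrix θ x))
    hvc.continuousOn isClosed_univ h0 hfin (by simp)
    (continuous_integrableOn_bounded hb hcc)
    (continuous_integrableOn_bounded hb (hvc.comp hcc))
  rw [havg, setAverage_eq, smul_eq_mul] at this
  rw [Measure.real] at this
  exact (le_inv_mul_iff₀ hpos).1 this

/-- For an even convex `q`, the radial function `z ↦ q ‖z‖` is convex. -/
lemma convexOn_even_comp_norm {q : ℝ → ℝ} (hq : ConvexOn ℝ Set.univ q)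
    (heven : ∀ s, q (-s) = q s) : ConvexOn ℝ Set.univ (fun z : ℂ => q ‖z‖) := by
  -- An even convex function is nondecreasing in `|s|`: `[-t, t]` has equal endpoint values.
  have hmono : ∀ s t : ℝ, 0 ≤ s → s ≤ t → q s ≤ q t := by
    intro s t hs hst
    have h := hq.le_max_of_mem_Icc (Set.mem_univ (-t)) (Set.mem_univ t)
      (show s ∈ Set.Icc (-t) t from ⟨by linarith, hst⟩)
    simpa [heven] using h
  refine ⟨convex_univ, fun x _ y _ a b ha hb hab => ?_⟩
  refine (hmono _ (a • ‖x‖ + b • ‖y‖) (norm_nonneg _) ?_).trans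
    (hq.2 (Set.mem_univ _) (Set.mem_univ _) ha hb hab)
  refine (norm_add_le _ _).trans_eq ?_
  rw [norm_smul, norm_smul, Real.norm_of_nonneg ha, Real.norm_of_nonneg hb, smul_eq_mul,
    smul_eq_mul]

/-! ### A mean value criterion for convexity -/

/-- A continuous function on `ℝ` which lies below its means over the pushforwards of the uniform
measure under `t ↦ s + ε cos t` is convex: otherwise its excess over some chord has a positive
maximum, and the mean inequality fails at the leftmost maximum point. -/
lemma convexOn_of_cos_mean {p : ℝ → ℝ} (hp : Continuous p)
    (hmean : ∀ s ε : ℝ, 0 < ε →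
      2 * Real.pi * p s ≤ ∫ t in (0 : ℝ)..(2 * Real.pi), p (s + ε * Real.cos t)) :
    ConvexOn ℝ Set.univ p := by
  refine LinearOrder.convexOn_of_lt convex_univ ?_
  intro x _ y _ hxy a b ha hb hab
  by_contra hcon
  push Not at hcon
  simp only [smul_eq_mul] at hcon
  -- `q` is the excess of `p` over its chord on `[x, y]`
  set m : ℝ := (p y - p x) / (y - x) with hm
  have hmxy : m * (y - x) = p y - p x := by
    rw [hm, div_mul_cancel₀ _ (sub_ne_zero.2 hxy.ne')]
  set q : ℝ → ℝ := fun s => p s - p x - m * (s - x) with hq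
  have hqc : Continuous q := by fun_prop
  have hqx : q x = 0 := by simp [hq]
  have hqy : q y = 0 := by simp only [hq]; linarith
  have hqz : 0 < q (a * x + b * y) := by
    have e : m * (a * x + b * y - x) = b * (p y - p x) := by
      rw [← hmxy, show a = 1 - b by linarith]; ring
    simp only [hq, e]
    rw [show a = 1 - b by linarith] at hcon ⊢
    linarith
  obtain ⟨s₁, hs₁, hmax⟩ := isCompact_Icc.exists_isMaxOn (Set.nonempty_Icc.2 hxy.le)
    hqc.continuousOn
  set M := q s₁ with hM
  have hle : ∀ s ∈ Set.Icc x y, q s ≤ M := fun s hs => hmax hs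
  have hMpos : 0 < M := by
    refine hqz.trans_le (hle _ ⟨?_, ?_⟩)
    · rw [show a = 1 - b by linarith]; nlinarith
    · rw [show b = 1 - a by linarith]; nlinarith
  have hKc : IsCompact (Set.Icc x y ∩ q ⁻¹' {M}) :=
    isCompact_Icc.inter_right (isClosed_singleton.preimage hqc)
  obtain ⟨s₀, ⟨hs₀, hqs₀⟩, hleast⟩ := hKc.exists_isLeast ⟨s₁, hs₁, rfl⟩
  have hqs₀ : q s₀ = M := hqs₀
  have hx0 : x < s₀ := lt_of_le_of_ne hs₀.1 fun h => by rw [← h, hqx] at hqs₀; linarith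
  have hy0 : s₀ < y := lt_of_le_of_ne hs₀.2 fun h => by rw [h, hqy] at hqs₀; linarith
  set ε := min (s₀ - x) (y - s₀) with hε
  have hεpos : 0 < ε := lt_min (by linarith) (by linarith)
  have hε1 : ε ≤ s₀ - x := min_le_left _ _
  have hε2 : ε ≤ y - s₀ := min_le_right _ _
  have hmem : ∀ t, s₀ + ε * Real.cos t ∈ Set.Icc x y := fun t =>
    ⟨by nlinarith [Real.neg_one_le_cos t], by nlinarith [Real.cos_le_one t]⟩
  have hlt : q (s₀ + ε * Real.cos Real.pi) < M := by
    refine lt_of_le_of_ne (hle _ (hmem _)) fun h => ?_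
    have := hleast ⟨hmem Real.pi, h⟩
    rw [Real.cos_pi] at this
    linarith
  have hint : ∫ t in (0 : ℝ)..(2 * Real.pi), q (s₀ + ε * Real.cos t) <
      ∫ t in (0 : ℝ)..(2 * Real.pi), M := by
    refine intervalIntegral.integral_lt_integral_of_continuousOn_of_le_of_exists_lt
      (by positivity) (by fun_prop) (by fun_prop) (fun t _ => hle _ (hmem t))
      ⟨Real.pi, ⟨Real.pi_pos.le, by linarith [Real.pi_pos]⟩, hlt⟩
  have hsplit : ∫ t in (0 : ℝ)..(2 * Real.pi), q (s₀ + ε * Real.cos t) =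
      (∫ t in (0 : ℝ)..(2 * Real.pi), p (s₀ + ε * Real.cos t))
        - 2 * Real.pi * (p x + m * (s₀ - x)) := by
    have e : ∀ t, q (s₀ + ε * Real.cos t) = p (s₀ + ε * Real.cos t) -
        ((p x + m * (s₀ - x)) + (m * ε) * Real.cos t) := by
      intro t; simp only [hq]; ring
    simp_rw [e]
    rw [intervalIntegral.integral_sub (Continuous.intervalIntegrable (by fun_prop) _ _)
      (Continuous.intervalIntegrable (by fun_prop) _ _),
      intervalIntegral.integral_add (Continuous.intervalIntegrable (by fun_prop) _ _)
      (Continuous.intervalIntegrable (by fun_prop) _ _)]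
    rw [intervalIntegral.integral_const, intervalIntegral.integral_const_mul, integral_cos]
    simp
  rw [hsplit, intervalIntegral.integral_const, smul_eq_mul, ← hqs₀] at hint
  have := hmean s₀ ε hεpos
  simp only [hq] at hint
  linarith

/-! ### Rank-one convexity of quasiconvex functions -/

/-- Smooth cutoffs of `[0, L]`, supported in `[-2, L + 2]`, with a derivative bound uniform
in `L`. -/
lemma exists_cutoff : ∃ C : ℝ, 0 ≤ C ∧ ∀ L : ℝ, 0 ≤ L → ∃ χ : ℝ → ℝ, ContDiff ℝ (⊤ : ℕ∞) χ ∧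
    (∀ t ∈ Set.Icc 0 L, χ t = 1 ∧ deriv χ t = 0) ∧
    (∀ t, t ∉ Set.Icc (-2) (L + 2) → χ t = 0) ∧ (∀ t, |χ t| ≤ 1) ∧ ∀ t, |deriv χ t| ≤ C := by
  set ψ := Real.smoothTransition with hψ
  have hψs : ContDiff ℝ (⊤ : ℕ∞) ψ := Real.smoothTransition.contDiff
  have hψd : Differentiable ℝ ψ := hψs.differentiable (by simp)
  have hψc : HasCompactSupport (deriv ψ) := by
    refine HasCompactSupport.intro (isCompact_Icc (a := (0 : ℝ)) (b := 1)) fun t ht => ?_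
    rw [Set.mem_Icc, not_and_or, not_le, not_le] at ht
    rcases ht with ht | ht
    · have : ψ =ᶠ[nhds t] fun _ => 0 := by
        filter_upwards [Iio_mem_nhds ht] with u hu
        exact Real.smoothTransition.zero_of_nonpos (le_of_lt hu)
      rw [this.deriv_eq, deriv_const]
    · have : ψ =ᶠ[nhds t] fun _ => 1 := by
        filter_upwards [Ioi_mem_nhds ht] with u hu
        exact Real.smoothTransition.one_of_one_le (le_of_lt hu)
      rw [this.deriv_eq, deriv_const]
  obtain ⟨C, hC⟩ := hψc.exists_bound_of_continuous (hψs.continuous_deriv (by simp))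
  simp only [Real.norm_eq_abs] at hC
  have hψ1 : ∀ t, |ψ t| ≤ 1 := fun t => by
    rw [abs_of_nonneg (Real.smoothTransition.nonneg t)]
    exact Real.smoothTransition.le_one t
  have hC0 : 0 ≤ C := (abs_nonneg _).trans (hC 0)
  refine ⟨2 * C, by positivity, fun L hL => ⟨fun t => ψ (t + 2) * ψ (L + 2 - t), ?_, ?_, ?_, ?_, ?_⟩⟩
  · exact (hψs.comp (by fun_prop)).mul (hψs.comp (by fun_prop))
  · intro t ht
    have : (fun t => ψ (t + 2) * ψ (L + 2 - t)) =ᶠ[nhds t] fun _ => 1 := by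
      filter_upwards [Ioo_mem_nhds (show -1 < t by linarith [ht.1])
        (show t < L + 1 by linarith [ht.2])] with u hu
      rw [hψ, Real.smoothTransition.one_of_one_le (by linarith [hu.1]),
        Real.smoothTransition.one_of_one_le (by linarith [hu.2]), one_mul]
    exact ⟨this.eq_of_nhds, by rw [this.deriv_eq, deriv_const]⟩
  · intro t ht
    rw [Set.mem_Icc, not_and_or, not_le, not_le] at ht
    rcases ht with ht | ht
    · simp only [hψ]
      rw [Real.smoothTransition.zero_of_nonpos (by linarith), zero_mul]
    · simp only [hψ]
      rw [Real.smoothTransition.zero_of_nonpos (x := L + 2 - t) (by linarith), mul_zero]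
  · intro t
    rw [abs_mul]
    exact mul_le_one₀ (hψ1 _) (abs_nonneg _) (hψ1 _)
  · intro t
    have h1 : HasDerivAt (fun t => ψ (t + 2)) (deriv ψ (t + 2)) t :=
      (hψd (t + 2)).hasDerivAt.comp_add_const t 2
    have h2 : HasDerivAt (fun t => ψ (L + 2 - t)) (-deriv ψ (L + 2 - t)) t :=
      (hψd (L + 2 - t)).hasDerivAt.comp_const_sub (L + 2) t
    have h3 : HasDerivAt (fun t => ψ (t + 2) * ψ (L + 2 - t)) _ t := h1.mul h2
    rw [h3.deriv]
    refine (abs_add_le _ _).trans ?_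
    rw [abs_mul, abs_mul, abs_neg]
    nlinarith [mul_le_mul (hC (t + 2)) (hψ1 (L + 2 - t)) (abs_nonneg _) hC0,
      mul_le_mul (hψ1 (t + 2)) (hC (L + 2 - t)) (abs_nonneg _) zero_le_one]

lemma setIntegral_box_eval_zero (f : ℝ → ℝ) {L : ℝ} (hL : 0 ≤ L) :
    ∫ x in Set.univ.pi (fun _ : Fin 2 => Set.Icc 0 L), f (x 0) =
      L * ∫ t in (0 : ℝ)..L, f t := by
  rw [volume_pi, Measure.restrict_pi_pi]
  have := integral_fintype_prod_eq_prod (𝕜 := ℝ) (![f, fun _ => 1] : Fin 2 → ℝ → ℝ)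
    (μ := fun _ : Fin 2 => (volume : Measure ℝ).restrict (Set.Icc 0 L))
  simp only [Fin.prod_univ_two, Matrix.cons_val_zero, Matrix.cons_val_one, mul_one] at this
  rw [this, intervalIntegral.integral_of_le hL, ← integral_Icc_eq_integral_Ioc]
  simp [hL, mul_comm]

/-- A quasiconvex function satisfies the mean inequality of `convexOn_of_cos_mean` along every
rank-one line in direction `e ⊗ e₀`. The test map is `χ(x₀) χ(x₁) ε sin(x₀) e` on a box of side
`2πN`: its gradient is `ε cos(x₀) e ⊗ e₀` up to a boundary layer of area `O(N)`, on which it stays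
bounded, so dividing by `N²` gives the claim. -/
lemma quasiconvex_cos_mean {w : Matrix (Fin 2) (Fin 2) ℝ → ℝ} (hw : Continuous w)
    (hq : QuasiconvexMorrey w) (F₀ : Matrix (Fin 2) (Fin 2) ℝ) (e : Fin 2 → ℝ)
    {ε : ℝ} (hε : 0 < ε) :
    2 * Real.pi * w F₀ ≤ ∫ t in (0 : ℝ)..(2 * Real.pi),
      w (F₀ + Matrix.vecMulVec e ![ε * Real.cos t, 0]) := by
  obtain ⟨C, hC0, hcut⟩ := exists_cutoff
  set H : ℝ × ℝ → ℝ := fun z => w (F₀ + Matrix.vecMulVec e ![z.1, z.2]) with hH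
  have hHc : Continuous H := by
    refine hw.comp (continuous_const.add (Continuous.matrix_vecMulVec continuous_const ?_))
    refine continuous_pi fun i => ?_
    fin_cases i <;> simp <;> fun_prop
  have hH0 : H (0, 0) = w F₀ := by
    simp only [hH]
    congr 1
    ext i j
    fin_cases j <;> simp [Matrix.vecMulVec]
  set K := C * ε + ε with hK
  have hK0 : 0 ≤ K := by positivity
  obtain ⟨M, hM⟩ : ∃ M, ∀ z ∈ Set.Icc (-K) K ×ˢ Set.Icc (-K) K, H z ≤ M := by
    obtain ⟨M, hM⟩ := (isCompact_Icc.prod isCompact_Icc).bddAbove_image (f := H)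
      (K := Set.Icc (-K) K ×ˢ Set.Icc (-K) K) hHc.continuousOn
    exact ⟨M, fun z hz => hM (Set.mem_image_of_mem _ hz)⟩
  have hM0 : w F₀ ≤ M := by
    rw [← hH0]; exact hM _ ⟨⟨by simpa, hK0⟩, ⟨by simpa, hK0⟩⟩
  set J := ∫ t in (0 : ℝ)..(2 * Real.pi), w (F₀ + Matrix.vecMulVec e ![ε * Real.cos t, 0]) with hJ
  have hπ := Real.pi_gt_three
  have key : ∀ N : ℕ, (2 * Real.pi * N) ^ 2 * M - (2 * Real.pi * N) * (N * J) ≤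
      (2 * Real.pi * N + 6) ^ 2 * (M - w F₀) := by
    intro N
    set L := 2 * Real.pi * N with hLdef
    have hL : 0 ≤ L := by positivity
    obtain ⟨χ, hχs, hχ1, hχ0, hχb, hχd⟩ := hcut L hL
    have hχdiff : ∀ t, HasDerivAt χ (deriv χ t) t := fun t =>
      (hχs.differentiable (by simp) t).hasDerivAt
    set Ω : Set (Fin 2 → ℝ) := Set.univ.pi (fun _ => Set.Ioo (-3) (L + 3)) with hΩ
    set B : Set (Fin 2 → ℝ) := Set.univ.pi (fun _ => Set.Icc 0 L) with hB
    have hBΩ : B ⊆ Ω := Set.pi_mono fun i _ t ht => ⟨by linarith [ht.1], by linarith [ht.2]⟩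
    have hΩo : IsOpen Ω := isOpen_set_pi Set.finite_univ fun _ _ => isOpen_Ioo
    have hΩb : Bornology.IsBounded Ω := Bornology.IsBounded.pi fun _ => Metric.isBounded_Ioo _ _
    have hΩv : (volume Ω).toReal = (L + 6) ^ 2 := by
      rw [hΩ, Real.volume_pi_Ioo_toReal (fun _ => by linarith)]
      simp only [Fin.prod_univ_two]; ring
    have hBv : (volume B).toReal = L ^ 2 := by
      rw [hB, Set.pi_univ_Icc, Real.volume_Icc_pi_toReal (fun _ => hL)]
      simp only [Fin.prod_univ_two]; ring
    set A : ℝ → ℝ := fun t => χ t * (ε * Real.sin t) with hA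
    set dA : ℝ → ℝ := fun t => deriv χ t * (ε * Real.sin t) + χ t * (ε * Real.cos t) with hdA
    have hAd : ∀ t, HasDerivAt A (dA t) t := fun t =>
      (hχdiff t).mul ((Real.hasDerivAt_sin t).const_mul ε)
    have hAs : ContDiff ℝ (⊤ : ℕ∞) A := hχs.mul (contDiff_const.mul Real.contDiff_sin)
    set θ : (Fin 2 → ℝ) → (Fin 2 → ℝ) := fun x => (A (x 0) * χ (x 1)) • e with hθ
    have hθs : ContDiff ℝ (⊤ : ℕ∞) θ :=
      ((hAs.comp (contDiff_apply ℝ ℝ 0)).mul (hχs.comp (contDiff_apply ℝ ℝ 1))).smul contDiff_const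
    have hgrad : ∀ x, gradMatrix θ x =
        Matrix.vecMulVec e ![dA (x 0) * χ (x 1), A (x 0) * deriv χ (x 1)] := by
      intro x
      have h0 := (hAd (x 0)).comp_hasFDerivAt x
        (hasFDerivAt_apply (𝕜 := ℝ) (F' := fun _ : Fin 2 => ℝ) 0 x)
      have h1 := (hχdiff (x 1)).comp_hasFDerivAt x
        (hasFDerivAt_apply (𝕜 := ℝ) (F' := fun _ : Fin 2 => ℝ) 1 x)
      have h : HasFDerivAt θ _ x := (h0.mul h1).smul_const e
      ext i j
      rw [gradMatrix, Matrix.of_apply, h.fderiv]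
      fin_cases j <;> simp [Matrix.vecMulVec] <;> ring
    have hclosed : IsClosed (Set.univ.pi (fun _ : Fin 2 => Set.Icc (-2) (L + 2))) :=
      isClosed_set_pi fun _ _ => isClosed_Icc
    have hcompact : IsCompact (Set.univ.pi (fun _ : Fin 2 => Set.Icc (-2) (L + 2))) :=
      isCompact_univ_pi fun _ => isCompact_Icc
    have hzero : ∀ x, x ∉ Set.univ.pi (fun _ : Fin 2 => Set.Icc (-2) (L + 2)) → θ x = 0 := by
      intro x hx
      simp only [Set.mem_univ_pi, Fin.forall_fin_two, not_and_or] at hx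
      rcases hx with hx | hx
      · simp [hθ, hA, hχ0 _ hx]
      · simp [hθ, hχ0 _ hx]
    have hθc : HasCompactSupport θ := HasCompactSupport.intro hcompact hzero
    have hθΩ : tsupport θ ⊆ Ω := by
      refine (closure_minimal (fun x hx => ?_) hclosed).trans
        (Set.pi_mono fun i _ t ht => ⟨by linarith [ht.1], by linarith [ht.2]⟩ :
          Set.univ.pi (fun _ : Fin 2 => Set.Icc (-2) (L + 2)) ⊆ Ω)
      by_contra h
      exact hx (hzero x h)
    have hmain := hq Ω hΩo hΩb F₀ θ hθs hθc hθΩ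
    set Ψ : (Fin 2 → ℝ) → ℝ := fun x => w (F₀ + gradMatrix θ x) with hΨ
    have hΨH : ∀ x, Ψ x = H (dA (x 0) * χ (x 1), A (x 0) * deriv χ (x 1)) := fun x => by
      simp only [hΨ, hH, hgrad]
    have hΨc : Continuous Ψ := hw.comp (continuous_const.add (continuous_gradMatrix hθs))
    have hsin : ∀ t, |ε * Real.sin t| ≤ ε := fun t => by
      rw [abs_mul, abs_of_pos hε]
      exact mul_le_of_le_one_right hε.le (Real.abs_sin_le_one t)
    have hcos : ∀ t, |ε * Real.cos t| ≤ ε := fun t => by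
      rw [abs_mul, abs_of_pos hε]
      exact mul_le_of_le_one_right hε.le (Real.abs_cos_le_one t)
    have hAb : ∀ t, |A t| ≤ ε := fun t => by
      rw [hA, abs_mul]
      exact (mul_le_mul (hχb t) (hsin t) (abs_nonneg _) zero_le_one).trans_eq (one_mul _)
    have hdAb : ∀ t, |dA t| ≤ K := fun t => by
      refine (abs_add_le _ _).trans (add_le_add ?_ ?_)
      · rw [abs_mul]
        exact mul_le_mul (hχd t) (hsin t) (abs_nonneg _) hC0
      · rw [abs_mul]
        exact (mul_le_mul (hχb t) (hcos t) (abs_nonneg _) zero_le_one).trans_eq (one_mul _)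
    have hΨM : ∀ x, Ψ x ≤ M := by
      intro x
      rw [hΨH]
      refine hM _ ⟨abs_le.1 ?_, abs_le.1 ?_⟩
      · rw [abs_mul]
        exact (mul_le_mul (hdAb _) (hχb _) (abs_nonneg _) hK0).trans_eq (mul_one _)
      · rw [abs_mul]
        have := mul_le_mul (hAb (x 0)) (hχd (x 1)) (abs_nonneg _) hε.le
        rw [hK]
        linarith
    have hBm : MeasurableSet B := MeasurableSet.univ_pi fun _ => measurableSet_Icc
    have hinner : ∫ x in B, Ψ x = L * (N * J) := by
      have e1 : ∫ x in B, Ψ x =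
          ∫ x in B, (fun t => w (F₀ + Matrix.vecMulVec e ![ε * Real.cos t, 0])) (x 0) := by
        refine setIntegral_congr_fun hBm fun x hx => ?_
        have hx0 := hχ1 (x 0) (hx 0 trivial)
        have hx1 := hχ1 (x 1) (hx 1 trivial)
        simp only [hΨ, hgrad, hA, hdA, hx0, hx1]
        simp
      rw [e1, setIntegral_box_eval_zero
        (fun t => w (F₀ + Matrix.vecMulVec e ![ε * Real.cos t, 0])) hL]
      congr 1
      have hper : Function.Periodic
          (fun t => w (F₀ + Matrix.vecMulVec e ![ε * Real.cos t, 0])) (2 * Real.pi) := by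
        intro t
        simp only [Real.cos_add_two_pi]
      have hcont : Continuous (fun t => w (F₀ + Matrix.vecMulVec e ![ε * Real.cos t, 0])) :=
        hHc.comp (by fun_prop : Continuous fun t => (ε * Real.cos t, (0 : ℝ)))
      have := hper.intervalIntegral_add_zsmul_eq N 0 fun a b => hcont.intervalIntegrable a b
      simp only [zero_add, zsmul_eq_mul, Int.cast_natCast] at this
      rw [hLdef, mul_comm (2 * Real.pi) (N : ℝ), this]
    have hi : IntegrableOn (fun x => M - Ψ x) Ω :=
      continuous_integrableOn_bounded hΩb (continuous_const.sub hΨc)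
    have hmono : ∫ x in B, (M - Ψ x) ≤ ∫ x in Ω, (M - Ψ x) :=
      setIntegral_mono_set hi (Filter.Eventually.of_forall fun x => sub_nonneg.2 (hΨM x))
        hBΩ.eventuallyLE
    have hsub : ∀ S : Set (Fin 2 → ℝ), Bornology.IsBounded S →
        ∫ x in S, (M - Ψ x) = (volume S).toReal * M - ∫ x in S, Ψ x := by
      intro S hS
      have h1 : IntegrableOn (fun _ : Fin 2 → ℝ => M) S :=
        continuous_integrableOn_bounded hS continuous_const
      have h2 : IntegrableOn Ψ S := continuous_integrableOn_bounded hS hΨc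
      rw [integral_sub h1 h2, setIntegral_const, smul_eq_mul, Measure.real]
    rw [hsub B (hΩb.subset hBΩ), hsub Ω hΩb, hinner, hBv, hΩv] at hmono
    rw [hΩv] at hmain
    linarith
  by_contra hcon
  push Not at hcon
  have hd : 0 < 2 * Real.pi * w F₀ - J := sub_pos.2 hcon
  obtain ⟨N, hN⟩ := exists_nat_gt (max 1 (18 * (M - w F₀) / (2 * Real.pi * w F₀ - J)))
  have hN1 : (1 : ℝ) < N := (le_max_left _ _).trans_lt hN
  have hN2 := (div_lt_iff₀ hd).1 ((le_max_right _ _).trans_lt hN)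
  have hk := key N
  set L := 2 * Real.pi * N with hL
  have hL6 : 6 ≤ L := by rw [hL]; nlinarith
  -- Since `L² w F₀ = L N (2π w F₀)`, the inequality `key` reads `L N d ≤ (12 L + 36) (M - w F₀)`.
  have h1 : L * (N * (2 * Real.pi * w F₀ - J)) ≤ (12 * L + 36) * (M - w F₀) := by
    have : L * (N * (2 * Real.pi * w F₀)) = L ^ 2 * w F₀ := by rw [hL]; ring
    nlinarith
  have h2 : (12 * L + 36) * (M - w F₀) ≤ L * (18 * (M - w F₀)) := by
    nlinarith [mul_nonneg (sub_nonneg.2 hL6) (sub_nonneg.2 hM0)]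
  have h3 := mul_lt_mul_of_pos_left hN2 (show 0 < L by linarith)
  linarith

/-- A continuous quasiconvex function is convex along rank-one lines in direction `e ⊗ e₀`. -/
lemma quasiconvex_convexOn_line {w : Matrix (Fin 2) (Fin 2) ℝ → ℝ} (hw : Continuous w)
    (hq : QuasiconvexMorrey w) (F : Matrix (Fin 2) (Fin 2) ℝ) (e : Fin 2 → ℝ) :
    ConvexOn ℝ Set.univ (fun s : ℝ => w (F + Matrix.vecMulVec e ![s, 0])) := by
  refine convexOn_of_cos_mean ?_ fun s ε hε => ?_
  · refine hw.comp (continuous_const.add (Continuous.matrix_vecMulVec continuous_const ?_))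
    refine continuous_pi fun i => ?_
    fin_cases i <;> simp <;> fun_prop
  · refine (quasiconvex_cos_mean hw hq _ e hε).trans_eq ?_
    congr 1
    funext t
    congr 1
    rw [add_assoc, ← Matrix.vecMulVec_add]
    simp

/-! ### The envelope formula -/

lemma exists_unit_conf (z : ℂ) : ∃ e : Fin 2 → ℝ, e 0 ^ 2 + e 1 ^ 2 = 1 ∧
    z.re = ‖z‖ * e 0 ∧ z.im = ‖z‖ * e 1 := by
  refine ⟨![Real.cos z.arg, Real.sin z.arg], by simp, ?_, ?_⟩
  · simp [Complex.norm_mul_cos_arg]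
  · simp [Complex.norm_mul_sin_arg]

/-- The quasiconvex part of Proposition 3.2 (Dacorogna–Koshigoe): for
`W̄(F) = g(√(‖F‖² − 2 det F))` with `g : [0,∞) → ℝ` continuous and bounded below,
the quasiconvex envelope of `W̄` (over continuous quasiconvex minorants) equals
`C g̃(√(‖F‖² − 2 det F))`, where `g̃(t) = g(|t|)`. -/
theorem quasiconvexEnvelope_of_conformal_type_energy
    (g : ℝ → ℝ) (hcont : ContinuousOn g (Set.Ici 0))
    (hbd : ∃ c : ℝ, ∀ t : ℝ, 0 ≤ t → c ≤ g t) :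
    ∀ F : Matrix (Fin 2) (Fin 2) ℝ,
      sSup {y : ℝ | ∃ w : Matrix (Fin 2) (Fin 2) ℝ → ℝ, Continuous w ∧
          QuasiconvexMorrey w ∧
          (∀ X : Matrix (Fin 2) (Fin 2) ℝ,
            w X ≤ g (Real.sqrt (frobSq X - 2 * X.det))) ∧ y = w F} =
        convexEnvelope (fun s => g |s|) (Real.sqrt (frobSq F - 2 * F.det)) := by
  intro F
  obtain ⟨c, hc⟩ := hbd
  simp_rw [← norm_conf]
  rw [convexEnvelope]
  set S₁ := {y : ℝ | ∃ w : Matrix (Fin 2) (Fin 2) ℝ → ℝ, Continuous w ∧ QuasiconvexMorrey w ∧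
    (∀ X : Matrix (Fin 2) (Fin 2) ℝ, w X ≤ g ‖conf X‖) ∧ y = w F} with hS₁
  set S₂ := {y : ℝ | ∃ p : ℝ → ℝ, ConvexOn ℝ Set.univ p ∧ (∀ s : ℝ, p s ≤ g |s|) ∧
    y = p ‖conf F‖} with hS₂
  have hlift : ∀ y ∈ S₂, ∃ y' ∈ S₁, y ≤ y' := by
    rintro y ⟨p, hp, hpg, rfl⟩
    -- The even convex minorant `s ↦ max (p s) (p (-s))` is at least as large as `p`.
    have hpneg : ConvexOn ℝ Set.univ (fun s => p (-s)) := 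
      hp.comp_linearMap (-LinearMap.id : ℝ →ₗ[ℝ] ℝ)
    have hv := convexOn_even_comp_norm (hp.sup hpneg) fun s => by
      simp only [Pi.sup_apply, neg_neg]; exact max_comm _ _
    refine ⟨_, ⟨fun X => (p ⊔ fun s => p (-s)) ‖conf X‖, ?_, quasiconvex_comp_conf hv, ?_, rfl⟩, ?_⟩
    · exact (continuousOn_univ.1 (hv.continuousOn isOpen_univ)).comp continuous_conf
    · intro X
      refine sup_le ?_ ?_
      · simpa using hpg ‖conf X‖
      · simpa using hpg (-‖conf X‖)
    · exact le_sup_left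
  have hsub : S₁ ⊆ S₂ := by
    rintro y ⟨w, hw, hq, hwg, rfl⟩
    obtain ⟨e, he, hre, him⟩ := exists_unit_conf (conf F)
    -- The rank-one line through `F` along which the anticonformal part is `s e`.
    refine ⟨fun s => w (F + Matrix.vecMulVec e ![-‖conf F‖, 0] + Matrix.vecMulVec e ![s, 0]),
      quasiconvex_convexOn_line hw hq _ e, fun s => (hwg _).trans_eq ?_, ?_⟩
    · congr 1
      rw [conf_add, conf_add, Complex.norm_eq_sqrt_sq_add_sq, ← Real.sqrt_sq_eq_abs]
      congr 1
      rw [Complex.add_re, Complex.add_re, Complex.add_im, Complex.add_im, hre, him]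
      simp only [conf, Matrix.vecMulVec_apply, Matrix.cons_val_zero, Matrix.cons_val_one]
      linear_combination s ^ 2 * he
    · congr 1
      ext i j
      fin_cases j <;> simp
  have hne₂ : S₂.Nonempty :=
    ⟨c, fun _ => c, convexOn_const c convex_univ, fun s => hc _ (abs_nonneg s), rfl⟩
  have hne₁ : S₁.Nonempty := by
    obtain ⟨y, hy⟩ := hne₂
    obtain ⟨y', hy', -⟩ := hlift y hy
    exact ⟨y', hy'⟩
  have hbdd₂ : BddAbove S₂ := by
    refine ⟨g ‖conf F‖, ?_⟩
    rintro y ⟨p, -, hpg, rfl⟩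
    simpa using hpg ‖conf F‖
  refine le_antisymm (csSup_le_csSup hbdd₂ hne₁ hsub) (csSup_le hne₂ fun y hy => ?_)
  obtain ⟨y', hy', hyy'⟩ := hlift y hy
  exact hyy'.trans (le_csSup (hbdd₂.mono hsub) hy')
end
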